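/- arXiv:2208.13308 — 2 statements merged into one kernel-verified Lean document; each statement's English description precedes it below -/
import Mathlib

section
/- There is an absolute constant C > 0 with the following property: for all integers n > k ≥ 1 and all f₁, f₂ ∈ Q₀ⁿ satisfying the Busemann–Petty condition ∫_H f₁ dλ_H ≤ ∫_H f₂ dλ_H for every k-dimensional linear subspace H ⊆ ℝⁿ, and such that the function f₁^{n/k} is centered (∫_{ℝⁿ} x · f₁(x)^{n/k} dx = 0), one has ‖f₁‖_{n/k} ≤ (C·L)^{n−k} · ‖f₂‖₁^{k/n} · ‖f₂‖_∞^{(n−k)/n}, where L is the isotropic constant of the function f₁^{n/k}. -/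
open MeasureTheory

noncomputable section

/-- `ℝⁿ` with its Euclidean structure. -/
abbrev Eucl (n : ℕ) := EuclideanSpace ℝ (Fin n)

/-- `f : ℝⁿ → [0,∞)` is log-concave:
`f(tx+(1−t)y) ≥ f(x)^t · f(y)^(1−t)` for all `x, y` and `t ∈ (0,1)`. -/
def IsLogConcave {n : ℕ} (f : Eucl n → ℝ) : Prop :=
  ∀ x y : Eucl n, ∀ t : ℝ, 0 < t → t < 1 →
    f x ^ t * f y ^ (1 - t) ≤ f (t • x + (1 - t) • y)

/-- The class `Q₀ⁿ`: nonnegative, log-concave, upper semicontinuous, integrable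
functions with positive integral. -/
def MemQ0 {n : ℕ} (f : Eucl n → ℝ) : Prop :=
  (∀ x, 0 ≤ f x) ∧ IsLogConcave f ∧ UpperSemicontinuous f ∧
    Integrable f ∧ 0 < ∫ x, f x

/-- `‖f‖_∞ = sup f`. -/
def supNorm {n : ℕ} (f : Eucl n → ℝ) : ℝ := ⨆ x, f x

/-- `‖f‖_p = (∫ f^p)^(1/p)`. -/
def lpNorm {n : ℕ} (p : ℝ) (f : Eucl n → ℝ) : ℝ := (∫ x, f x ^ p) ^ (1 / p)

/-- `‖P_H f‖_{L¹(H)} = ∫_H sup_{z ∈ H⊥} f(y+z) dλ_H(y)`, the `L¹(H)`-norm of the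
projection of `f` onto the subspace `H` (with the Lebesgue measure on `H` induced
by the Euclidean structure). -/
def projL1 {n : ℕ} (f : Eucl n → ℝ) (H : Submodule ℝ (Eucl n)) : ℝ :=
  ∫ y : H, ⨆ z : Hᗮ, f ((y : Eucl n) + (z : Eucl n))

/-- `‖S_H f‖_{L¹(H)} = ∫_H f dλ_H`, the integral of the section `f|_H`. -/
def sectL1 {n : ℕ} (f : Eucl n → ℝ) (H : Submodule ℝ (Eucl n)) : ℝ :=
  ∫ y : H, f (y : Eucl n)

/-- The covariance matrix of the probability measure `‖g‖₁⁻¹ g(x) dx`: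
`Cov(g)_{ij} = ‖g‖₁⁻¹ ∫ xᵢxⱼ g − bᵢbⱼ` with barycenter `b = ‖g‖₁⁻¹ ∫ x g(x) dx`. -/
def covMatrix {d : ℕ} (g : Eucl d → ℝ) : Matrix (Fin d) (Fin d) ℝ :=
  Matrix.of fun i j =>
    (∫ x, g x * x i * x j) / (∫ x, g x) -
      ((∫ x, g x * x i) / ∫ x, g x) * ((∫ x, g x * x j) / ∫ x, g x)

/-- The isotropic constant `L_g = (‖g‖_∞/‖g‖₁)^{1/d} · (det Cov(g))^{1/(2d)}`. -/
def isoConst {d : ℕ} (g : Eucl d → ℝ) : ℝ :=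
  (supNorm g / ∫ x, g x) ^ ((1 : ℝ) / d) *
    (covMatrix g).det ^ (1 / (2 * (d : ℝ)))

open Set Metric Real

lemma superlevel_convex {n : ℕ} {f : Eucl n → ℝ} (hf : IsLogConcave f) {δ : ℝ} (hδ : 0 < δ) :
    Convex ℝ {x | δ < f x} := by
  rw [convex_iff_forall_pos]
  intro x hx y hy a b ha hb hab
  have hb' : b = 1 - a := by linarith
  subst hb'
  simp only [mem_ofPred_eq] at *
  refine lt_of_lt_of_le ?_ (hf x y a ha (by linarith))
  calc δ = δ ^ a * δ ^ (1 - a) := by rw [← rpow_add hδ]; simp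
    _ < _ := by
      apply mul_lt_mul'' <;> first | positivity | exact rpow_lt_rpow hδ.le (by assumption) (by assumption)

lemma convex_bounded {n : ℕ} {K : Set (Eucl n)} (hK : Convex ℝ K) {x₀ : Eucl n} {r : ℝ}
    (hr : 0 < r) (hb : ball x₀ r ⊆ K) (hfin : volume K < ⊤) :
    ∃ R : ℝ, 0 < R ∧ ∀ x ∈ K, ‖x - x₀‖ ≤ R := by
  set v := volume (ball x₀ (r / 2)) with hv
  have hv0 : v ≠ 0 := (measure_ball_pos _ _ (by positivity)).ne'
  have hvball : ∀ c : Eucl n, volume (ball c (r / 2)) = v := fun c => by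
    rw [hv, Measure.addHaar_ball_center, ← Measure.addHaar_ball_center volume x₀]
  obtain ⟨N, hN⟩ := ENNReal.exists_nat_mul_gt hv0 hfin.ne
  refine ⟨2 * (N + 1) * r, by positivity, fun x hx => ?_⟩
  by_contra! hlt
  apply hN.not_ge
  set D := ‖x - x₀‖ with hD
  set t : ℕ → ℝ := fun j => j / (2 * (N + 1)) with ht
  have hsub : (⋃ j ∈ Finset.range N, ball (x₀ + t j • (x - x₀)) (r / 2)) ⊆ K := by
    intro z hz
    simp only [mem_iUnion, Finset.mem_range] at hz
    obtain ⟨j, hj, hz⟩ := hz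
    have ht0 : 0 ≤ t j := by positivity
    have ht1 : t j ≤ 1 / 2 := by
      rw [ht]; simp only
      rw [div_le_div_iff₀ (by positivity) (by positivity)]
      have : (j : ℝ) ≤ N := by exact_mod_cast hj.le
      linarith
    have h1t : 0 < 1 - t j := by linarith
    set b := x₀ + (1 - t j)⁻¹ • (z - (x₀ + t j • (x - x₀))) with hbdef
    have hbK : b ∈ K := by
      apply hb
      rw [mem_ball, dist_eq_norm, hbdef, add_sub_cancel_left, norm_smul, norm_inv,
        Real.norm_of_nonneg h1t.le]
      rw [mem_ball, dist_eq_norm] at hz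
      rw [inv_mul_lt_iff₀ h1t]
      nlinarith
    have hzz : z = t j • x + (1 - t j) • b := by
      rw [hbdef, smul_add, smul_smul, mul_inv_cancel₀ h1t.ne', one_smul]
      module
    rw [hzz]
    exact hK hx hbK ht0 h1t.le (by ring)
  calc (N : ENNReal) * v = ∑ j ∈ Finset.range N, volume (ball (x₀ + t j • (x - x₀)) (r / 2)) := by
        simp [hvball]
    _ = volume (⋃ j ∈ Finset.range N, ball (x₀ + t j • (x - x₀)) (r / 2)) := by
        rw [measure_biUnion_finset _ (fun _ _ => measurableSet_ball)]
        intro i _ j _ hij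
        apply ball_disjoint_ball
        rw [dist_eq_norm]
        have : x₀ + t i • (x - x₀) - (x₀ + t j • (x - x₀)) = (t i - t j) • (x - x₀) := by module
        rw [this, norm_smul, ← hD]
        have h1 : (1:ℝ) ≤ |(i:ℝ) - j| := by
          have : (1:ℤ) ≤ |(i:ℤ) - j| := Int.one_le_abs (by omega)
          exact_mod_cast this
        have h2 : ‖t i - t j‖ = |(i:ℝ) - j| / (2 * (N + 1)) := by
          rw [Real.norm_eq_abs, ht]; simp only
          rw [← sub_div, abs_div, abs_of_pos (by positivity : (0:ℝ) < 2 * (N + 1))]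
        rw [h2, add_halves, div_mul_eq_mul_div, le_div_iff₀ (by positivity)]
        have h3 : D ≤ |(i:ℝ) - j| * D := le_mul_of_one_le_left (norm_nonneg _) h1
        linarith
    _ ≤ volume K := measure_mono hsub

lemma exp_decay {n : ℕ} {f : Eucl n → ℝ} (hf : MemQ0 f) :
    ∃ A c : ℝ, 0 < A ∧ 0 < c ∧ ∀ x, f x ≤ A * exp (-c * ‖x‖) := by
  obtain ⟨h0, hlc, husc, hIntg, hpos⟩ := hf
  rw [integral_pos_iff_support_of_nonneg h0 hIntg] at hpos
  have hU : Function.support f = ⋃ N : ℕ, {x | 1 / ((N : ℝ) + 1) < f x} := by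
    ext x
    simp only [Function.mem_support, mem_iUnion, mem_ofPred_eq]
    constructor
    · intro hx
      exact exists_nat_one_div_lt (lt_of_le_of_ne (h0 x) (Ne.symm hx))
    · rintro ⟨N, hN⟩
      have : (0:ℝ) < 1 / ((N : ℝ) + 1) := by positivity
      linarith
  rw [hU] at hpos
  obtain ⟨N, hN⟩ := exists_measure_pos_of_not_measure_iUnion_null hpos.ne'
  set δ : ℝ := 1 / ((N : ℝ) + 1) with hδdef
  have hδ : 0 < δ := by positivity
  have hconv := superlevel_convex hlc hδ
  have hne : (interior {x | δ < f x}).Nonempty := by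
    by_contra hemp
    rw [not_nonempty_iff_eq_empty] at hemp
    have := hconv.addHaar_frontier volume
    rw [frontier, hemp, sdiff_empty] at this
    exact hN.ne' (measure_mono_null subset_closure this)
  obtain ⟨x₀, hx₀⟩ := hne
  obtain ⟨r, hr, hball⟩ := Metric.isOpen_iff.1 isOpen_interior x₀ hx₀
  have hη : 0 < δ * exp (-1) := by positivity
  have hle : δ * exp (-1) < δ := by
    have : exp (-1) < 1 := by simp
    nlinarith
  obtain ⟨R, hR, hRK⟩ := convex_bounded (superlevel_convex hlc hη) hr
    ((hball.trans interior_subset).trans (fun x (hx : δ < f x) => hle.trans hx))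
    (hIntg.measure_gt_lt_top hη)
  have hfx₀ : x₀ ∈ {x | δ < f x} := interior_subset hx₀
  rw [mem_ofPred_eq] at hfx₀
  -- enlarge the radius by one
  set S := R + 1 with hS
  have hS0 : 0 < S := by positivity
  obtain ⟨B, hB⟩ := (husc.upperSemicontinuousOn _).bddAbove_of_isCompact
    (isCompact_closedBall x₀ S)
  have hB' : ∀ x, ‖x - x₀‖ ≤ S → f x ≤ B := fun x hx =>
    hB (mem_image_of_mem f (by rwa [mem_closedBall, dist_eq_norm]))
  have hBx : f x₀ ≤ B := hB' x₀ (by simpa using hS0.le)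
  have hB0 : 0 < B := by linarith
  have key : ∀ x, f x ≤ B * exp 1 * exp (-(1 / S) * ‖x - x₀‖) := by
    intro x
    rw [mul_assoc, ← Real.exp_add]
    rcases le_or_gt ‖x - x₀‖ S with h | h
    · refine (hB' x h).trans (le_mul_of_one_le_right hB0.le ?_)
      apply Real.one_le_exp
      have : 1 / S * ‖x - x₀‖ ≤ 1 := by
        rw [one_div, inv_mul_le_iff₀ hS0]; linarith
      linarith
    · have hn0 : 0 < ‖x - x₀‖ := hS0.trans h
      set t := S / ‖x - x₀‖ with ht
      have ht0 : 0 < t := by positivity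
      have ht1 : t < 1 := by rw [ht, div_lt_one hn0]; exact h
      have h1 := hlc x x₀ t ht0 ht1
      have h2 : f (t • x + (1 - t) • x₀) ≤ δ * exp (-1) := by
        by_contra! hcon
        have := hRK _ hcon
        have h3 : t • x + (1 - t) • x₀ - x₀ = t • (x - x₀) := by module
        rw [h3, norm_smul, Real.norm_of_nonneg ht0.le, ht, div_mul_cancel₀ _ hn0.ne'] at this
        linarith
      have h4 : f x ^ t * f x₀ ^ (1 - t) ≤ f x₀ * exp (-1) :=
        h1.trans (h2.trans (by gcongr))
      have hp : 0 < f x₀ := hδ.trans hfx₀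
      have h5 : f x ^ t ≤ f x₀ ^ t * exp (-1) := by
        have h6 : f x₀ = f x₀ ^ t * f x₀ ^ (1 - t) := by rw [← rpow_add hp]; simp
        have h7 : 0 < f x₀ ^ (1 - t) := by positivity
        refine le_of_mul_le_mul_right ?_ h7
        calc _ ≤ _ := h4
          _ = (f x₀ ^ t * f x₀ ^ (1 - t)) * exp (-1) := by rw [← h6]
          _ = _ := by ring
      have h8 : f x ≤ f x₀ * exp (-(1 / S) * ‖x - x₀‖) := by
        have := rpow_le_rpow (rpow_nonneg (h0 x) t) h5 (inv_nonneg.2 ht0.le)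
        rw [← rpow_mul (h0 x), mul_inv_cancel₀ ht0.ne', rpow_one, mul_rpow (by positivity)
          (by positivity), ← rpow_mul hp.le, mul_inv_cancel₀ ht0.ne', rpow_one, ← Real.exp_mul]
          at this
        convert this using 3
        rw [ht]; field_simp
      refine h8.trans ?_
      apply mul_le_mul hBx _ (by positivity) hB0.le
      apply Real.exp_le_exp.2
      linarith
  refine ⟨B * exp 1 * exp ((1 / S) * ‖x₀‖), 1 / S, by positivity, by positivity, fun x => ?_⟩
  refine (key x).trans ?_
  rw [mul_assoc _ (exp (1 / S * ‖x₀‖)), ← Real.exp_add]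
  have : ‖x‖ ≤ ‖x - x₀‖ + ‖x₀‖ := by simpa using norm_add_le (x - x₀) x₀
  gcongr
  have h9 : 0 < 1 / S := by positivity
  nlinarith

lemma integrable_exp_decay {E : Type*} [NormedAddCommGroup E] [NormedSpace ℝ E]
    [FiniteDimensional ℝ E] [MeasurableSpace E] [BorelSpace E] (μ : Measure E)
    [μ.IsAddHaarMeasure] {c : ℝ} (hc : 0 < c) (m : ℕ) :
    Integrable (fun x : E => ‖x‖ ^ m * exp (-c * ‖x‖)) μ := by
  obtain ⟨C, hC⟩ : ∃ C : ℝ, ∀ t : ℝ, 0 ≤ t → 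
      t ^ m * exp (-c * t) ≤ C * (1 + t) ^ (-((Module.finrank ℝ E + 1 : ℕ) : ℝ)) := by
    set N := m + (Module.finrank ℝ E + 1) with hN
    refine ⟨N.factorial * exp c / c ^ N, fun t ht => ?_⟩
    have h1 : (c * (1 + t)) ^ N / N.factorial ≤ exp (c * (1 + t)) :=
      Real.pow_div_factorial_le_exp _ (by positivity) N
    rw [rpow_neg (by positivity), rpow_natCast, ← div_eq_mul_inv, le_div_iff₀ (by positivity),
      le_div_iff₀ (by positivity)]
    rw [div_le_iff₀ (by positivity)] at h1
    have h2 : t ^ m ≤ (1 + t) ^ m := by gcongr; linarith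
    calc t ^ m * exp (-c * t) * (1 + t) ^ (Module.finrank ℝ E + 1) * c ^ N
        ≤ (1 + t) ^ m * exp (-c * t) * (1 + t) ^ (Module.finrank ℝ E + 1) * c ^ N := by gcongr
      _ = exp (-c * t) * (c * (1 + t)) ^ N := by rw [hN, mul_pow, pow_add (1 + t)]; ring
      _ ≤ exp (-c * t) * (exp (c * (1 + t)) * N.factorial) := by gcongr
      _ = N.factorial * exp c := by
        rw [← mul_assoc, ← Real.exp_add]; ring_nf
  have hI := (integrable_one_add_norm (E := E) (μ := μ)
    (r := ((Module.finrank ℝ E + 1 : ℕ) : ℝ)) (by push_cast; linarith)).const_mul C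
  refine hI.mono' (by fun_prop) (Filter.Eventually.of_forall fun x => ?_)
  rw [Real.norm_of_nonneg (by positivity)]
  exact hC _ (norm_nonneg x)


lemma lintegral_radial {E : Type*} [NormedAddCommGroup E] [NormedSpace ℝ E] [FiniteDimensional ℝ E]
    [MeasurableSpace E] [BorelSpace E] [Nontrivial E] (μ : Measure E) [μ.IsAddHaarMeasure]
    (f : ℝ → ENNReal) (hf : Measurable f) :
    ∫⁻ x, f ‖x‖ ∂μ = (Module.finrank ℝ E * μ (ball 0 1)) *
      ∫⁻ y in Ioi (0 : ℝ), ENNReal.ofReal (y ^ (Module.finrank ℝ E - 1)) * f y := by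
  calc
    ∫⁻ x, f (‖x‖) ∂μ = ∫⁻ x : ({(0)}ᶜ : Set E), f (‖x.1‖) ∂(μ.comap (↑)) := by
      rw [lintegral_subtype_comap (measurableSet_singleton _).compl fun x ↦ f (‖x‖),
        restrict_compl_singleton]
    _ = ∫⁻ x, f x.2 ∂μ.toSphere.prod (.volumeIoiPow (Module.finrank ℝ E - 1)) := by
      simpa using μ.measurePreserving_homeomorphUnitSphereProd.lintegral_comp_emb
        (Homeomorph.measurableEmbedding _) (f ∘ Subtype.val ∘ Prod.snd)
    _ = μ.toSphere univ * ∫⁻ x : Ioi (0 : ℝ), f x ∂.volumeIoiPow (Module.finrank ℝ E - 1) := by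
      rw [lintegral_prod _ (by fun_prop)]
      simp [mul_comm]
    _ = _ := by
      rw [μ.toSphere_apply_univ, Measure.volumeIoiPow,
        lintegral_withDensity_eq_lintegral_mul _ (by fun_prop) (by fun_prop)]
      congr 1
      simp only [Pi.mul_apply]
      rw [lintegral_subtype_comap measurableSet_Ioi
        fun a ↦ ENNReal.ofReal (a ^ (Module.finrank ℝ E - 1)) * f a]

abbrev OG (n : ℕ) : Type := ↥(unitary (EuclideanSpace ℝ (Fin n) →L[ℝ] EuclideanSpace ℝ (Fin n)))

instance (n : ℕ) :
    ContinuousStar (EuclideanSpace ℝ (Fin n) →L[ℝ] EuclideanSpace ℝ (Fin n)) :=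
  ⟨ContinuousLinearMap.adjoint.continuous⟩

instance (n : ℕ) : CompactSpace (OG n) := by
  apply isCompact_iff_compactSpace.mp
  have : ProperSpace (EuclideanSpace ℝ (Fin n) →L[ℝ] EuclideanSpace ℝ (Fin n)) :=
    FiniteDimensional.proper ℝ _
  apply Metric.isCompact_of_isClosed_isBounded isClosed_unitary
  rw [isBounded_iff_forall_norm_le]
  refine ⟨1, fun x hx => ?_⟩
  apply ContinuousLinearMap.opNorm_le_bound _ zero_le_one
  intro v
  rw [one_mul]
  exact (ContinuousLinearMap.norm_map_of_mem_unitary hx v).le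

instance (n : ℕ) : MeasurableSpace (OG n) := borel _
instance (n : ℕ) : BorelSpace (OG n) := ⟨rfl⟩

def ogHaar (n : ℕ) : Measure (OG n) := Measure.haarMeasure ⊤
instance (n : ℕ) : IsProbabilityMeasure (ogHaar n) := ⟨by
  unfold ogHaar
  simpa using Measure.haarMeasure_self (G := OG n) (K₀ := ⊤)⟩
instance (n : ℕ) : (ogHaar n).IsHaarMeasure := by unfold ogHaar; infer_instance

lemma ogAct_continuous (n : ℕ) :
    Continuous fun p : OG n × EuclideanSpace ℝ (Fin n) => (p.1⁻¹).1 p.2 := by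
  have h1 : Continuous fun p : OG n × EuclideanSpace ℝ (Fin n) => (p.1⁻¹).1 := 
    continuous_subtype_val.comp (continuous_inv.comp continuous_fst)
  exact h1.clm_apply continuous_snd

lemma ogAct_continuous' (n : ℕ) (x : EuclideanSpace ℝ (Fin n)) :
    Continuous fun U : OG n => (U⁻¹).1 x := by
  have h1 : Continuous fun U : OG n => (U⁻¹).1 := continuous_subtype_val.comp continuous_inv
  exact h1.clm_apply continuous_const

lemma ogAvg_invariant {n : ℕ} (F : EuclideanSpace ℝ (Fin n) → ENNReal)
    {x y : EuclideanSpace ℝ (Fin n)} (h : ‖x‖ = ‖y‖) :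
    ∫⁻ U : OG n, F ((U⁻¹).1 x) ∂(ogHaar n) = ∫⁻ U : OG n, F ((U⁻¹).1 y) ∂(ogHaar n) := by
  set V : OG n := Unitary.linearIsometryEquiv.symm (ℝ ∙ (x - y))ᗮ.reflection with hV
  have hVx : V.1 x = y := Submodule.reflection_sub h
  rw [← lintegral_mul_left_eq_self (fun U : OG n => F ((U⁻¹).1 x)) V⁻¹]
  refine lintegral_congr fun U => ?_
  rw [mul_inv_rev, inv_inv, ← hVx]
  rfl

set_option maxHeartbeats 400000 in
/-- Averaging over rotations of a `k`-dimensional subspace. -/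
lemma rot_average {n k : ℕ} (hk : 1 ≤ k) (hkn : k < n)
    (ι : EuclideanSpace ℝ (Fin k) →ₗᵢ[ℝ] EuclideanSpace ℝ (Fin n)) :
    ∃ c : ENNReal, c ≠ 0 ∧ c ≠ ⊤ ∧ ∀ F : EuclideanSpace ℝ (Fin n) → ENNReal, Measurable F →
      c * ∫⁻ x, F x * ENNReal.ofReal (‖x‖ ^ (-((n - k : ℕ) : ℝ))) =
      ∫⁻ U : OG n, (∫⁻ y, F ((U⁻¹).1 (ι y))) ∂(ogHaar n) := by
  have : NeZero n := ⟨by omega⟩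
  have : NeZero k := ⟨by omega⟩
  set e : EuclideanSpace ℝ (Fin n) := EuclideanSpace.single 0 1 with he
  have hen : ‖e‖ = 1 := by simp [he]
  set a : ENNReal := (Module.finrank ℝ (EuclideanSpace ℝ (Fin n)) *
    volume (ball (0 : EuclideanSpace ℝ (Fin n)) 1)) with ha
  set b : ENNReal := (Module.finrank ℝ (EuclideanSpace ℝ (Fin k)) *
    volume (ball (0 : EuclideanSpace ℝ (Fin k)) 1)) with hb
  have ha0 : a ≠ 0 := by
    simp only [ha, finrank_euclideanSpace_fin]
    exact mul_ne_zero (by simp; omega) (measure_ball_pos _ _ one_pos).ne'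
  have hb0 : b ≠ 0 := by
    simp only [hb, finrank_euclideanSpace_fin]
    exact mul_ne_zero (by simp; omega) (measure_ball_pos _ _ one_pos).ne'
  have ha1 : a ≠ ⊤ := ENNReal.mul_ne_top (by simp) measure_ball_lt_top.ne
  have hb1 : b ≠ ⊤ := ENNReal.mul_ne_top (by simp) measure_ball_lt_top.ne
  refine ⟨b / a, ENNReal.div_ne_zero.2 ⟨hb0, ha1⟩, ENNReal.div_ne_top hb1 ha0, fun F hF => ?_⟩
  have hmeas : Measurable fun p : OG n × EuclideanSpace ℝ (Fin n) => F ((p.1⁻¹).1 p.2) :=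
    hF.comp (ogAct_continuous n).measurable
  set Φ : EuclideanSpace ℝ (Fin n) → ENNReal := fun x => ∫⁻ U : OG n, F ((U⁻¹).1 x) ∂(ogHaar n)
    with hΦ
  have hΦm : Measurable Φ := Measurable.lintegral_prod_left' hmeas
  set ψ : ℝ → ENNReal := fun r => Φ (r • e) with hψ
  have hψm : Measurable ψ := hΦm.comp (by fun_prop)
  have hrad : ∀ x, Φ x = ψ ‖x‖ := fun x => ogAvg_invariant F (by simp [norm_smul, hen])
  set w : ℝ → ENNReal := fun r => ENNReal.ofReal (r ^ (-((n - k : ℕ) : ℝ))) with hw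
  have hwm : Measurable w := by fun_prop
  -- left side
  have h1 : ∀ U : OG n, ∫⁻ x, F x * w ‖x‖ = ∫⁻ x, F ((U⁻¹).1 x) * w ‖x‖ := by
    intro U
    have := (Unitary.linearIsometryEquiv U⁻¹).measurePreserving.lintegral_comp_emb
      (Unitary.linearIsometryEquiv U⁻¹).toHomeomorph.measurableEmbedding
      (fun x => F x * w ‖x‖)
    rw [← this]
    refine lintegral_congr fun x => ?_
    rw [LinearIsometryEquiv.norm_map]
    rfl
  have h2 : ∫⁻ x, F x * w ‖x‖ =
      ∫⁻ x : EuclideanSpace ℝ (Fin n), ψ ‖x‖ * w ‖x‖ := by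
    calc ∫⁻ x, F x * w ‖x‖ = ∫⁻ U : OG n, (∫⁻ x, F ((U⁻¹).1 x) * w ‖x‖) ∂(ogHaar n) := by
          rw [lintegral_congr fun U => (h1 U).symm]
          simp
      _ = ∫⁻ x, ∫⁻ U : OG n, F ((U⁻¹).1 x) * w ‖x‖ ∂(ogHaar n) := by
          apply lintegral_lintegral_swap
          exact (hmeas.mul (by fun_prop)).aemeasurable
      _ = _ := by
          refine lintegral_congr fun x => ?_
          have hx : Measurable fun U : OG n => F ((U⁻¹).1 x) :=
            hF.comp (ogAct_continuous' n x).measurable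
          rw [lintegral_mul_const _ hx]
          exact congrArg (· * w ‖x‖) (hrad x)
  have h3 : ∫⁻ U : OG n, (∫⁻ y, F ((U⁻¹).1 (ι y))) ∂(ogHaar n) =
      ∫⁻ y : EuclideanSpace ℝ (Fin k), ψ ‖y‖ := by
    rw [lintegral_lintegral_swap]
    · refine lintegral_congr fun y => ?_
      rw [← ι.norm_map y, ← hrad]
    · exact (hmeas.comp (by fun_prop : Measurable
        fun p : OG n × EuclideanSpace ℝ (Fin k) => (p.1, ι p.2))).aemeasurable
  have h4 := lintegral_radial (volume : Measure (EuclideanSpace ℝ (Fin n)))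
    (fun r => ψ r * w r) (hψm.mul hwm)
  have h5 := lintegral_radial (volume : Measure (EuclideanSpace ℝ (Fin k))) ψ hψm
  rw [h2, h3, h4, h5, ← ha, ← hb, ← mul_assoc, ENNReal.div_mul_cancel ha0 ha1]
  congr 1
  refine setLIntegral_congr_fun measurableSet_Ioi fun r hr => ?_
  have hr' : (0:ℝ) < r := hr
  simp only [finrank_euclideanSpace_fin, hw]
  rw [mul_comm (ψ r), ← mul_assoc, ← ENNReal.ofReal_mul (by positivity)]
  congr 2
  rw [← Real.rpow_natCast, ← Real.rpow_natCast, ← Real.rpow_add hr']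
  congr 1
  rw [Nat.cast_sub hkn.le, Nat.cast_sub (by omega), Nat.cast_sub (by omega)]
  ring


lemma section_transfer {n k : ℕ} {f₁ f₂ : Eucl n → ℝ} (h1 : MemQ0 f₁) (h2 : MemQ0 f₂)
    (hBP : ∀ H : Submodule ℝ (Eucl n), Module.finrank ℝ H = k → sectL1 f₁ H ≤ sectL1 f₂ H)
    (T : Eucl k →ₗ[ℝ] Eucl n) (hT : Function.Injective T) :
    ∫⁻ y, ENNReal.ofReal (f₁ (T y)) ≤ ∫⁻ y, ENNReal.ofReal (f₂ (T y)) := by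
  set H := LinearMap.range T with hH
  set e := (LinearEquiv.ofInjective T hT).toContinuousLinearEquiv with he
  have hrank : Module.finrank ℝ H = k := by
    rw [← (LinearEquiv.ofInjective T hT).finrank_eq]; simp
  have hs := hBP H hrank
  have hm1 := h1.2.2.1.measurable
  have hm2 := h2.2.2.1.measurable
  obtain ⟨A, c, hA, hc, hdec⟩ := exp_decay h1
  have hint1 : Integrable (fun y : H => f₁ (y : Eucl n)) := by
    have := (integrable_exp_decay (volume : Measure H) hc 0).const_mul A
    refine this.mono' (hm1.comp measurable_subtype_coe).aestronglyMeasurable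
      (Filter.Eventually.of_forall fun y => ?_)
    rw [Real.norm_of_nonneg (h1.1 _)]
    simpa using hdec y
  have hH : ∫⁻ y : H, ENNReal.ofReal (f₁ y) ≤ ∫⁻ y : H, ENNReal.ofReal (f₂ y) := by
    rw [← ofReal_integral_eq_lintegral_ofReal hint1 (Filter.Eventually.of_forall fun y => h1.1 _)]
    refine (ENNReal.ofReal_le_ofReal hs).trans ?_
    by_cases hint2 : Integrable (fun y : H => f₂ (y : Eucl n))
    · rw [← ofReal_integral_eq_lintegral_ofReal hint2
        (Filter.Eventually.of_forall fun y => h2.1 _)]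
      rfl
    · rw [sectL1, integral_undef hint2]; simp
  set ν : Measure H := Measure.map e volume with hν
  have hν' : ν.IsAddHaarMeasure := e.isAddHaarMeasure_map volume
  have hvol : (volume : Measure H) = Measure.addHaarScalarFactor volume ν • ν :=
    Measure.isAddLeftInvariant_eq_smul _ _
  set s := Measure.addHaarScalarFactor (volume : Measure H) ν with hsdef
  have hs0 : s ≠ 0 := (Measure.addHaarScalarFactor_pos_of_isAddHaarMeasure _ _).ne'
  have key : ∀ φ : Eucl n → ENNReal, Measurable φ →
      ∫⁻ y : H, φ y = (s : ENNReal) * ∫⁻ y, φ (T y) := by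
    intro φ hφ
    have hme : Measurable e := e.continuous.measurable
    have hφ' : Measurable fun y : H => φ (y : Eucl n) := hφ.comp measurable_subtype_coe
    rw [hvol, lintegral_smul_measure, hν, lintegral_map hφ' hme]
    rfl
  have k1 := key (fun x => ENNReal.ofReal (f₁ x)) hm1.ennreal_ofReal
  have k2 := key (fun x => ENNReal.ofReal (f₂ x)) hm2.ennreal_ofReal
  rw [k1, k2] at hH
  exact (ENNReal.mul_le_mul_iff_right (by simpa using hs0) (by simp)).1 hH

lemma weighted_transfer {n k : ℕ} (hk : 1 ≤ k) (hkn : k < n) {f₁ f₂ : Eucl n → ℝ}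
    (h1 : MemQ0 f₁) (h2 : MemQ0 f₂)
    (hBP : ∀ H : Submodule ℝ (Eucl n), Module.finrank ℝ H = k → sectL1 f₁ H ≤ sectL1 f₂ H)
    (A : Eucl n →ₗ[ℝ] Eucl n) (hA : Function.Injective A) :
    ∫⁻ x, ENNReal.ofReal (f₁ (A x)) * ENNReal.ofReal (‖x‖ ^ (-((n - k : ℕ) : ℝ))) ≤
    ∫⁻ x, ENNReal.ofReal (f₂ (A x)) * ENNReal.ofReal (‖x‖ ^ (-((n - k : ℕ) : ℝ))) := by
  have hι : Nonempty (Eucl k →ₗᵢ[ℝ] Eucl n) := by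
    obtain ⟨S, hS⟩ : ∃ S : Submodule ℝ (Eucl n), Module.finrank ℝ S = k := by
      have hli := ((EuclideanSpace.basisFun (Fin n) ℝ).orthonormal.comp (Fin.castLE hkn.le)
        (Fin.castLE_injective hkn.le)).linearIndependent
      exact ⟨_, by simpa using finrank_span_eq_card hli⟩
    let b := (stdOrthonormalBasis ℝ S).reindex (finCongr hS)
    exact ⟨S.subtypeₗᵢ.comp b.repr.symm.toLinearIsometry⟩
  obtain ⟨ι⟩ := hι
  obtain ⟨c, hc0, hc1, hc⟩ := rot_average hk hkn ι
  have hAm : Measurable A := A.continuous_of_finiteDimensional.measurable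
  have hm1 : Measurable fun x => ENNReal.ofReal (f₁ (A x)) :=
    (h1.2.2.1.measurable.comp hAm).ennreal_ofReal
  have hm2 : Measurable fun x => ENNReal.ofReal (f₂ (A x)) :=
    (h2.2.2.1.measurable.comp hAm).ennreal_ofReal
  rw [← ENNReal.mul_le_mul_iff_right hc0 hc1, hc _ hm1, hc _ hm2]
  refine lintegral_mono fun U => ?_
  refine section_transfer h1 h2 hBP
    (A ∘ₗ ((Unitary.linearIsometryEquiv U⁻¹).toLinearEquiv.toLinearMap ∘ₗ ι.toLinearMap)) ?_
  exact hA.comp ((Unitary.linearIsometryEquiv U⁻¹).injective.comp ι.injective)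

lemma ball_volume_le {n : ℕ} (hn : 1 ≤ n) :
    volume (ball (0 : Eucl n) 1) ≤ ENNReal.ofReal ((√(2 * π * exp 1) / √n) ^ n) := by
  have hn0 : (0:ℝ) < n := by exact_mod_cast hn
  have : NeZero n := ⟨by omega⟩
  have h1 := GaussianFourier.integral_rexp_neg_mul_sq_norm (V := Eucl n) (b := 1/2) (by norm_num)
  have hpos : ∀ v : Eucl n, 0 ≤ exp (-(1/2) * ‖v‖ ^ 2) := fun v => by positivity
  have hIntg : Integrable (fun v : Eucl n => exp (-(1/2) * ‖v‖ ^ 2)) := by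
    by_contra h
    rw [integral_undef h] at h1
    have : 0 < (π / (1/2)) ^ ((Module.finrank ℝ (Eucl n) : ℝ) / 2) := by positivity
    linarith
  have h2 : ENNReal.ofReal (exp (-(n:ℝ) / 2)) * volume (ball (0 : Eucl n) (√n)) ≤
      ENNReal.ofReal ((π / (1/2)) ^ ((Module.finrank ℝ (Eucl n) : ℝ) / 2)) := by
    rw [← h1, ofReal_integral_eq_lintegral_ofReal hIntg (Filter.Eventually.of_forall hpos)]
    rw [← setLIntegral_const]
    refine le_trans (setLIntegral_mono (by fun_prop) fun x hx => ?_) (setLIntegral_le_lintegral _ _)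
    apply ENNReal.ofReal_le_ofReal
    apply exp_le_exp.2
    rw [mem_ball_zero_iff] at hx
    have : ‖x‖ ^ 2 < (n:ℝ) := by
      calc ‖x‖ ^ 2 < √(n:ℝ) ^ 2 := by gcongr
        _ = (n:ℝ) := sq_sqrt hn0.le
    linarith
  rw [Measure.addHaar_ball _ _ (by positivity)] at h2
  have hfin : volume (ball (0 : Eucl n) 1) ≠ ⊤ := measure_ball_lt_top.ne
  set v := (volume (ball (0 : Eucl n) 1)).toReal with hv
  rw [← ENNReal.ofReal_toReal hfin] at h2 ⊢
  rw [← ENNReal.ofReal_mul (by positivity), ← ENNReal.ofReal_mul (by positivity),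
    ENNReal.ofReal_le_ofReal_iff (by positivity), finrank_euclideanSpace_fin] at h2
  apply ENNReal.ofReal_le_ofReal
  rw [div_pow, le_div_iff₀ (by positivity)]
  have h3 : √(2 * π * exp 1) ^ n = (2 * π) ^ ((n:ℝ) / 2) * exp ((n:ℝ)/2) := by
    rw [sqrt_eq_rpow, ← rpow_natCast, ← rpow_mul (by positivity), mul_rpow (by positivity)
      (by positivity), ← Real.exp_mul]
    congr 1
    · congr 1; ring
    · congr 1; ring
  rw [h3]
  have h4 : exp (-(n:ℝ)/2) * exp ((n:ℝ)/2) = 1 := by rw [← Real.exp_add]; simp; ring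
  have h5 : (π / (1/2)) = 2 * π := by ring
  rw [h5] at h2
  calc v * √n ^ n = (exp (-(n:ℝ)/2) * (√n ^ n * v)) * exp ((n:ℝ)/2) := by
        linear_combination (-(√n ^ n * v)) * h4
    _ ≤ _ := by gcongr


lemma lintegral_pow_Ioo {k : ℕ} (hk : 1 ≤ k) {R : ℝ} (hR : 0 < R) :
    ∫⁻ r in Ioo 0 R, ENNReal.ofReal (r ^ (k - 1)) = ENNReal.ofReal (R ^ k / k) := by
  have hIntg : IntegrableOn (fun r : ℝ => r ^ (k - 1)) (Ioo 0 R) :=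
    ((continuous_pow (k - 1)).integrableOn_Icc (a := 0) (b := R)).mono_set Ioo_subset_Icc_self
  rw [← ofReal_integral_eq_lintegral_ofReal hIntg]
  · congr 1
    rw [← integral_Ioc_eq_integral_Ioo, ← intervalIntegral.integral_of_le hR.le, integral_pow]
    have h1 : k - 1 + 1 = k := by omega
    have h2 : ((k - 1 : ℕ) : ℝ) + 1 = k := by exact_mod_cast congrArg (Nat.cast (R := ℝ)) h1
    rw [h1, h2, zero_pow (by omega), sub_zero]
  · filter_upwards [self_mem_ae_restrict measurableSet_Ioo] with r hr
    exact pow_nonneg hr.1.le _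

lemma upper_bound {n k : ℕ} (hk : 1 ≤ k) (hkn : k < n) {F : Eucl n → ℝ} (hFm : Measurable F)
    {M I R W : ℝ} (hM : 0 < M) (hFM : ∀ x, F x ≤ M) (hI0 : 0 ≤ I) (hR : 0 < R) (hW0 : 0 ≤ W)
    (hI : ∫⁻ x, ENNReal.ofReal (F x) = ENNReal.ofReal I)
    (hW : volume (ball (0 : Eucl n) 1) ≤ ENNReal.ofReal W) :
    ∫⁻ x, ENNReal.ofReal (F x) * ENNReal.ofReal (‖x‖ ^ (-((n - k : ℕ) : ℝ))) ≤
      ENNReal.ofReal (M * (n * W * (R ^ k / k)) + R ^ (-((n - k : ℕ) : ℝ)) * I) := by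
  have : NeZero n := ⟨by omega⟩
  set m : ℝ := ((n - k : ℕ) : ℝ) with hm
  have hm0 : 0 ≤ m := by positivity
  set φ : ℝ → ENNReal := indicator (Iio R) (fun r => ENNReal.ofReal (r ^ (-m))) with hφ
  have hφm : Measurable φ := Measurable.indicator (by fun_prop) measurableSet_Iio
  have hpt : ∀ x : Eucl n, ENNReal.ofReal (F x) * ENNReal.ofReal (‖x‖ ^ (-m)) ≤
      ENNReal.ofReal M * φ ‖x‖ + ENNReal.ofReal (R ^ (-m)) * ENNReal.ofReal (F x) := by
    intro x
    rcases lt_or_ge ‖x‖ R with h | h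
    · refine le_trans ?_ le_self_add
      rw [hφ, indicator_of_mem (show ‖x‖ ∈ Iio R from h)]
      gcongr
      exact hFM x
    · refine le_trans ?_ le_add_self
      rw [mul_comm]
      gcongr ?_ * _
      exact ENNReal.ofReal_le_ofReal (rpow_le_rpow_of_nonpos hR h (by linarith))
  have hrad := lintegral_radial (volume : Measure (Eucl n)) φ hφm
  have hφint : ∫⁻ y in Ioi (0:ℝ), ENNReal.ofReal (y ^ (Module.finrank ℝ (Eucl n) - 1)) * φ y =
      ENNReal.ofReal (R ^ k / k) := by
    rw [← lintegral_pow_Ioo hk hR, ← lintegral_indicator measurableSet_Ioi,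
      ← lintegral_indicator measurableSet_Ioo]
    refine lintegral_congr fun r => ?_
    by_cases h0 : 0 < r
    · by_cases h1 : r < R
      · rw [indicator_of_mem (show r ∈ Ioi 0 from h0), indicator_of_mem (show r ∈ Ioo 0 R from ⟨h0, h1⟩),
          hφ, indicator_of_mem (show r ∈ Iio R from h1), ← ENNReal.ofReal_mul (by positivity)]
        congr 1
        rw [finrank_euclideanSpace_fin, ← rpow_natCast, ← rpow_natCast, ← rpow_add h0]
        congr 1
        rw [hm, Nat.cast_sub hkn.le, Nat.cast_sub (by omega), Nat.cast_sub (by omega)]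
        ring
      · rw [indicator_of_mem (show r ∈ Ioi 0 from h0), indicator_of_notMem (show r ∉ Ioo 0 R from fun h => h1 h.2),
          hφ, indicator_of_notMem (show r ∉ Iio R from fun h => h1 h), mul_zero]
    · rw [indicator_of_notMem (show r ∉ Ioi 0 from fun h => h0 h),
        indicator_of_notMem (show r ∉ Ioo 0 R from fun h => h0 h.1)]
  rw [hφint, finrank_euclideanSpace_fin] at hrad
  calc _ ≤ ∫⁻ x : Eucl n, (ENNReal.ofReal M * φ ‖x‖ + ENNReal.ofReal (R ^ (-m)) * ENNReal.ofReal (F x)) :=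
        lintegral_mono hpt
    _ = ENNReal.ofReal M * (n * volume (ball (0 : Eucl n) 1) * ENNReal.ofReal (R ^ k / k)) +
        ENNReal.ofReal (R ^ (-m)) * ENNReal.ofReal I := by
        rw [lintegral_add_left (by fun_prop), lintegral_const_mul _ (by fun_prop),
          lintegral_const_mul _ (by fun_prop), hrad, hI]
    _ ≤ ENNReal.ofReal M * (n * ENNReal.ofReal W * ENNReal.ofReal (R ^ k / k)) +
        ENNReal.ofReal (R ^ (-m)) * ENNReal.ofReal I := by gcongr
    _ = _ := by
        rw [← ENNReal.ofReal_natCast n, ← ENNReal.ofReal_mul (by positivity),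
          ← ENNReal.ofReal_mul (by positivity), ← ENNReal.ofReal_mul (by positivity),
          ← ENNReal.ofReal_mul (by positivity), ← ENNReal.ofReal_add (by positivity) (by positivity)]

lemma lower_bound {n : ℕ} (hn : 1 ≤ n) {m : ℝ} (hm : 0 ≤ m) {F G : Eucl n → ℝ} {J s : ℝ}
    (hG0 : ∀ x, 0 ≤ G x) (hs : 0 ≤ s) (hFG : ∀ x, s * G x ≤ F x)
    (hGi : Integrable G) (hG2 : Integrable fun x => G x * ‖x‖ ^ 2)
    (hJ : ∫ x, G x = J) (hJ2 : ∫ x, G x * ‖x‖ ^ 2 = n * J) :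
    ENNReal.ofReal (s * (√(2 * n) ^ (-m) * (J / 2))) ≤
    ∫⁻ x, ENNReal.ofReal (F x) * ENNReal.ofReal (‖x‖ ^ (-m)) := by
  have hn0 : (0:ℝ) < n := by exact_mod_cast hn
  have : NeZero n := ⟨by omega⟩
  set q := √(2 * (n:ℝ)) with hq
  have hq0 : 0 < q := by positivity
  have hq2 : q ^ 2 = 2 * n := sq_sqrt (by positivity)
  set h : Eucl n → ℝ := fun x => s * (q ^ (-m) * (G x - (1 / (2 * n)) * (G x * ‖x‖ ^ 2))) with hh
  have hhi : Integrable h := ((hGi.sub (hG2.const_mul _)).const_mul _).const_mul _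
  have hIntg : ∫ x, h x = s * (q ^ (-m) * (J / 2)) := by
    rw [hh, integral_const_mul, integral_const_mul, integral_sub hGi (hG2.const_mul _),
      integral_const_mul, hJ, hJ2]
    congr 2
    field_simp
    ring
  rw [← hIntg]
  calc ENNReal.ofReal (∫ x, h x) ≤ ENNReal.ofReal (∫ x, max (h x) 0) := by
        apply ENNReal.ofReal_le_ofReal
        exact integral_mono hhi hhi.pos_part (fun x => le_max_left _ _)
    _ = ∫⁻ x, ENNReal.ofReal (max (h x) 0) :=
        ofReal_integral_eq_lintegral_ofReal hhi.pos_part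
          (Filter.Eventually.of_forall fun x => le_max_right _ _)
    _ ≤ _ := by
        apply lintegral_mono_ae
        have hne : ∀ᵐ x : Eucl n, x ≠ 0 := by
          simp [ae_iff]
        filter_upwards [hne] with x hx
        have hx0 : 0 < ‖x‖ := norm_pos_iff.2 hx
        have hF0 : 0 ≤ F x := (mul_nonneg hs (hG0 x)).trans (hFG x)
        rw [← ENNReal.ofReal_mul hF0]
        apply ENNReal.ofReal_le_ofReal
        apply max_le _ (by positivity)
        have hfac : h x = (s * G x) * (q ^ (-m) * (1 - ‖x‖ ^ 2 / (2 * n))) := by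
          rw [hh]; ring
        rw [hfac]
        have hsG : 0 ≤ s * G x := mul_nonneg hs (hG0 x)
        have hle : q ^ (-m) * (1 - ‖x‖ ^ 2 / (2 * n)) ≤ ‖x‖ ^ (-m) := by
          rcases le_or_gt ‖x‖ q with hc | hc
          · have h1 : q ^ (-m) ≤ ‖x‖ ^ (-m) := rpow_le_rpow_of_nonpos hx0 hc (by linarith)
            have h2 : 1 - ‖x‖ ^ 2 / (2 * n) ≤ 1 := by
              have : 0 ≤ ‖x‖ ^ 2 / (2 * (n:ℝ)) := by positivity
              linarith
            have h3 : 0 < q ^ (-m) := by positivity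
            nlinarith
          · have h2 : 1 - ‖x‖ ^ 2 / (2 * n) ≤ 0 := by
              have : 1 ≤ ‖x‖ ^ 2 / (2 * (n:ℝ)) := by
                rw [le_div_iff₀ (by positivity), one_mul, ← hq2]; gcongr
              linarith
            have h3 : 0 < q ^ (-m) := by positivity
            have h4 : 0 < ‖x‖ ^ (-m) := by positivity
            nlinarith
        exact (mul_le_mul_of_nonneg_left hle hsG).trans
          (mul_le_mul_of_nonneg_right (hFG x) (by positivity))


lemma integral_comp_lin {n : ℕ} (T : Eucl n →ₗ[ℝ] Eucl n) (hT : LinearMap.det T ≠ 0)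
    {φ : Eucl n → ℝ} (hφ : Measurable φ) :
    ∫ z, φ (T z) = |LinearMap.det T|⁻¹ * ∫ x, φ x := by
  have hTm : Measurable T := T.continuous_of_finiteDimensional.measurable
  rw [← integral_map hTm.aemeasurable hφ.aestronglyMeasurable,
    Measure.map_linearMap_addHaar_eq_smul_addHaar _ hT, integral_smul_measure,
    ENNReal.toReal_ofReal (abs_nonneg _), abs_inv, smul_eq_mul]

lemma integrable_comp_lin {n : ℕ} (T : Eucl n →ₗ[ℝ] Eucl n) (hT : LinearMap.det T ≠ 0)
    {φ : Eucl n → ℝ} (hφ : Measurable φ) (hi : Integrable φ) :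
    Integrable fun z => φ (T z) := by
  have hTm : Measurable T := T.continuous_of_finiteDimensional.measurable
  have : Integrable φ (Measure.map T volume) := by
    rw [Measure.map_linearMap_addHaar_eq_smul_addHaar _ hT]
    exact hi.smul_measure ENNReal.ofReal_ne_top
  exact (integrable_map_measure hφ.aestronglyMeasurable hTm.aemeasurable).1 this

lemma covariance_data {n : ℕ} {g : Eucl n → ℝ} (hg0 : ∀ x, 0 ≤ g x)
    (hgm : Measurable g) {A c : ℝ} (hc : 0 < c) (hdec : ∀ x, g x ≤ A * exp (-c * ‖x‖))
    (hpos : 0 < ∫ x, g x) (hcent : ∀ i, ∫ x, g x * x i = 0) :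
    ∃ T : Eucl n →ₗ[ℝ] Eucl n, ∃ d : ℝ, 0 < d ∧ d ^ 2 = (covMatrix g).det ∧
      |LinearMap.det T| = d ∧ Integrable (fun z => g (T z) * ‖z‖ ^ 2) ∧
      ∫ z, g (T z) * ‖z‖ ^ 2 = n * ((∫ x, g x) / d) := by
  set I := ∫ x, g x with hI
  have hgi : Integrable g := by
    by_contra h
    rw [hI, integral_undef h] at hpos
    exact lt_irrefl _ hpos
  have hij : ∀ i j, Integrable fun x : Eucl n => g x * x i * x j := by
    intro i j
    have := (integrable_exp_decay (volume : Measure (Eucl n)) hc 2).const_mul A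
    refine this.mono' (by fun_prop) (Filter.Eventually.of_forall fun x => ?_)
    rw [norm_mul, norm_mul, Real.norm_of_nonneg (hg0 x)]
    have h1 := PiLp.norm_apply_le x i
    have h2 := PiLp.norm_apply_le x j
    calc g x * ‖x i‖ * ‖x j‖ ≤ (A * exp (-c * ‖x‖)) * ‖x‖ * ‖x‖ := by
          gcongr
          · exact mul_nonneg ((hg0 x).trans (hdec x)) (norm_nonneg _)
          · exact (hg0 x).trans (hdec x)
          · exact hdec x
      _ = _ := by ring
  have hcov : ∀ i j, covMatrix g i j = (∫ x, g x * x i * x j) / I := by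
    intro i j
    simp [covMatrix, hcent, hI]
  -- quadratic forms
  have hquad : ∀ v : Fin n → ℝ, (fun x : Eucl n => g x * (∑ i, v i * x i) ^ 2) =
      fun x => ∑ i, ∑ j, v i * v j * (g x * x i * x j) := by
    intro v; funext x
    rw [sq, Finset.sum_mul_sum, Finset.mul_sum]
    refine Finset.sum_congr rfl fun i _ => ?_
    rw [Finset.mul_sum]
    refine Finset.sum_congr rfl fun j _ => ?_
    ring
  have hqi : ∀ v : Fin n → ℝ, Integrable (fun x : Eucl n => g x * (∑ i, v i * x i) ^ 2) := by
    intro v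
    rw [hquad]
    exact integrable_finsetSum _ fun i _ => integrable_finsetSum _ fun j _ =>
      (hij i j).const_mul _
  have hqint : ∀ v : Fin n → ℝ, ∫ x : Eucl n, g x * (∑ i, v i * x i) ^ 2 =
      I * (v ⬝ᵥ (covMatrix g).mulVec v) := by
    intro v
    rw [hquad, integral_finsetSum _ fun i _ => integrable_finsetSum _ fun j _ =>
      (hij i j).const_mul _]
    simp only [dotProduct, Matrix.mulVec, Finset.mul_sum]
    refine Finset.sum_congr rfl fun i _ => ?_
    rw [integral_finsetSum _ fun j _ => (hij i j).const_mul _]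
    refine Finset.sum_congr rfl fun j _ => ?_
    rw [integral_const_mul, hcov]
    field_simp
  have hPD : (covMatrix g).PosDef := by
    refine Matrix.PosDef.of_dotProduct_mulVec_pos ?_ ?_
    · ext i j
      rw [Matrix.conjTranspose_apply, hcov, hcov, star_trivial]
      congr 2
      funext x; ring
    · intro v hv
      rw [star_trivial]
      refine pos_of_mul_pos_right (a := I) ?_ hpos.le
      rw [← hqint, integral_pos_iff_support_of_nonneg (fun x => mul_nonneg (hg0 x) (sq_nonneg _))
        (hqi v)]
      rw [integral_pos_iff_support_of_nonneg hg0 hgi] at hpos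
      let ℓ : Eucl n →ₗ[ℝ] ℝ := innerₛₗ ℝ (WithLp.toLp 2 v)
      have hℓ : ∀ x : Eucl n, ℓ x = ∑ i, v i * x i := by
        intro x; simp [ℓ, PiLp.inner_apply, mul_comm]
      have hker : LinearMap.ker ℓ ≠ ⊤ := by
        intro htop
        have h0 : ℓ (WithLp.toLp 2 v) = 0 := by
          have : WithLp.toLp 2 v ∈ LinearMap.ker ℓ := by rw [htop]; trivial
          exact this
        have : WithLp.toLp 2 v = (0 : Eucl n) := inner_self_eq_zero.1 h0
        exact hv (by simpa using congrArg WithLp.ofLp this)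
      have hnull := Measure.addHaar_submodule (volume : Measure (Eucl n)) _ hker
      refine lt_of_lt_of_le hpos ?_
      calc volume (Function.support g) ≤ volume ((Function.support fun x : Eucl n =>
            g x * (∑ i, v i * x i) ^ 2) ∪ (LinearMap.ker ℓ : Set (Eucl n))) := by
            apply measure_mono
            intro x hx
            by_cases h : ℓ x = 0
            · exact Or.inr h
            · refine Or.inl ?_
              rw [hℓ] at h
              exact mul_ne_zero hx (pow_ne_zero 2 h)
        _ ≤ _ := (measure_union_le _ _).trans (by rw [hnull, add_zero])
  obtain ⟨B, hB⟩ : ∃ B : Matrix (Fin n) (Fin n) ℝ, covMatrix g = B.conjTranspose * B := by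
    open scoped MatrixOrder in
    exact CStarAlgebra.nonneg_iff_eq_star_mul_self.1 hPD.posSemidef.nonneg
  rw [Matrix.conjTranspose_eq_transpose_of_trivial] at hB
  have hdet : (covMatrix g).det = B.det ^ 2 := by
    rw [hB, Matrix.det_mul, Matrix.det_transpose, sq]
  have hBdet : B.det ≠ 0 := by
    intro h
    have := hPD.det_pos
    rw [hdet, h] at this
    simp at this
  set T : Eucl n →ₗ[ℝ] Eucl n := Matrix.toEuclideanLin B.transpose with hT
  have hTdet : LinearMap.det T = B.det := by
    rw [hT, Matrix.toEuclideanLin_eq_toLin_orthonormal, LinearMap.det_toLin, Matrix.det_transpose]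
  have hTdet0 : LinearMap.det T ≠ 0 := by rwa [hTdet]
  set N := B.transpose⁻¹ with hN
  have hBu : IsUnit B.transpose.det := by rw [Matrix.det_transpose]; exact hBdet.isUnit
  have hNT : ∀ z : Eucl n, ∀ i, ∑ j, N i j * T z j = z i := by
    intro z i
    have h1 : N.mulVec (B.transpose.mulVec (WithLp.ofLp z)) = WithLp.ofLp z := by
      rw [Matrix.mulVec_mulVec, hN, Matrix.nonsing_inv_mul _ hBu, Matrix.one_mulVec]
    exact congrFun h1 i
  have hNC : ∀ i, N i ⬝ᵥ (covMatrix g).mulVec (N i) = 1 := by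
    intro i
    have h1 : N * covMatrix g * N.transpose = 1 := by
      rw [hB, ← Matrix.mul_assoc, hN, Matrix.nonsing_inv_mul _ hBu, Matrix.one_mul,
        Matrix.transpose_nonsing_inv, Matrix.transpose_transpose]
      exact Matrix.mul_nonsing_inv _ hBdet.isUnit
    have h2 := congrFun (congrFun h1 i) i
    rw [Matrix.one_apply_eq, Matrix.mul_assoc] at h2
    rw [← h2]
    simp only [Matrix.mul_apply, dotProduct, Matrix.mulVec, Matrix.transpose_apply]
  have hfun : (fun z : Eucl n => g (T z) * ‖z‖ ^ 2) =
      fun z => ∑ i, (fun x : Eucl n => g x * (∑ j, N i j * x j) ^ 2) (T z) := by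
    funext z
    simp only [hNT, ← Finset.mul_sum]
    rw [EuclideanSpace.norm_sq_eq]
    simp
  have hmeas : ∀ i, Measurable (fun x : Eucl n => g x * (∑ j, N i j * x j) ^ 2) := by
    intro i; fun_prop
  have hcomp : ∀ i, Integrable
      fun z => (fun x : Eucl n => g x * (∑ j, N i j * x j) ^ 2) (T z) := fun i =>
    integrable_comp_lin T hTdet0 (hmeas i) (hqi (N i))
  refine ⟨T, |B.det|, abs_pos.2 hBdet, by rw [sq_abs, hdet], by rw [hTdet], ?_, ?_⟩
  · rw [hfun]
    exact integrable_finsetSum _ fun i _ => hcomp i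
  · rw [hfun, integral_finsetSum _ fun i _ => hcomp i]
    simp only [integral_comp_lin T hTdet0 (hmeas _), hqint, hNC, hTdet]
    simp
    left
    rw [div_eq_inv_mul]


lemma two_le_six_pow {n k : ℕ} (hk : 1 ≤ k) (hkn : k < n) :
    2 * ((n : ℝ) / k + 1) ≤ 6 ^ (n - k) := by
  obtain ⟨m, rfl⟩ : ∃ m, n = k + (m + 1) := ⟨n - k - 1, by omega⟩
  have hk' : (1 : ℝ) ≤ k := by exact_mod_cast hk
  have h1 : ((k + (m + 1) : ℕ) : ℝ) / k ≤ m + 2 := by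
    rw [div_le_iff₀ (by linarith)]
    push_cast
    nlinarith [(Nat.cast_nonneg m : (0 : ℝ) ≤ m)]
  have h2 := one_add_mul_le_pow (a := (5 : ℝ)) (by norm_num) (m + 1)
  have e : k + (m + 1) - k = m + 1 := by omega
  rw [e]
  norm_num at h2 ⊢
  push_cast at h1
  nlinarith [(Nat.cast_nonneg m : (0 : ℝ) ≤ m)]

lemma final_arith {n k : ℕ} (hk : 1 ≤ k) (hkn : k < n) {a b M M2 d c R : ℝ}
    (ha : 0 < a) (hb : 0 < b) (hM : 0 < M) (hM2 : 0 < M2) (hd : 0 < d) (hc : 0 < c)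
    (hR : R = (√n / c) * (b / d / M2) ^ ((1 : ℝ) / n))
    (H : M ^ (-(((n : ℝ) - k) / n)) * (√(2 * n) ^ (-((n - k : ℕ) : ℝ)) * (a / d / 2)) ≤
      M2 * (n * (c / √n) ^ n * (R ^ k / k)) + R ^ (-((n - k : ℕ) : ℝ)) * (b / d)) :
    a ^ ((k : ℝ) / n) ≤ (6 * √2 * c * ((M / a) ^ ((1 : ℝ) / n) * (d ^ 2) ^ (1 / (2 * (n : ℝ))))) ^ (n - k)
      * b ^ ((k : ℝ) / n) * M2 ^ (((n : ℝ) - k) / n) := by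
  have hn : (0 : ℝ) < n := by exact_mod_cast (by omega : 0 < n)
  have hk0 : (0 : ℝ) < k := by exact_mod_cast hk
  have hsn : 0 < √(n : ℝ) := sqrt_pos.2 hn
  have hmn : ((n - k : ℕ) : ℝ) = n - k := by push_cast [hkn.le]; ring
  set u := b / d / M2 with hu
  have hu0 : 0 < u := by positivity
  set r := √(n : ℝ) / c with hr
  have hr0 : 0 < r := by positivity
  have hR0 : 0 < R := by rw [hR]; positivity
  have hcr : c / √n = r⁻¹ := by rw [hr, inv_div]
  set θ := (k : ℝ) / n with hθ
  have hq : ((n : ℝ) - k) / n = 1 - θ := by rw [hθ]; field_simp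
  rw [hq] at H ⊢
  set m := n - k with hm
  have hnkm : n = k + m := by omega
  -- powers of R
  have hRk : R ^ k = r ^ k * u ^ θ := by
    rw [hR, mul_pow, ← rpow_natCast (u ^ _), ← rpow_mul hu0.le]
    congr 2; rw [hθ]; ring
  have hRm : R ^ (-(m : ℝ)) = (r ^ m)⁻¹ * u ^ (θ - 1) := by
    rw [hR, mul_rpow hr0.le (by positivity), rpow_neg hr0.le, rpow_natCast, ← rpow_mul hu0.le]
    congr 2; rw [hmn, hθ]; field_simp; ring
  have hbu : b / d = M2 * u := by rw [hu]; field_simp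
  have hRHS : M2 * (n * (c / √n) ^ n * (R ^ k / k)) + R ^ (-(m : ℝ)) * (b / d)
      = ((n : ℝ) / k + 1) * (r ^ m)⁻¹ * (M2 * u ^ θ) := by
    rw [hcr, hRk, hRm, hbu]
    have : u ^ (θ - 1) * u = u ^ θ := by
      rw [rpow_sub_one hu0.ne']; field_simp
    have e2 : (r⁻¹) ^ n * r ^ k = (r ^ m)⁻¹ := by
      rw [hnkm, pow_add, inv_pow, inv_pow]; field_simp
    calc _ = M2 * u ^ θ * (n / k) * ((r⁻¹) ^ n * r ^ k) + (r ^ m)⁻¹ * M2 * (u ^ (θ - 1) * u) := by ring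
      _ = _ := by rw [this, e2]; ring
  have hs : √(2 * (n : ℝ)) ^ (-(m : ℝ)) = ((√2 * √n) ^ m)⁻¹ := by
    rw [rpow_neg (by positivity), rpow_natCast, sqrt_mul (by norm_num)]
  have hL : ((M / a) ^ ((1 : ℝ) / n) * (d ^ 2) ^ (1 / (2 * (n : ℝ)))) ^ m
      = (M ^ (1 - θ) / a ^ (1 - θ)) * (d / d ^ θ) := by
    rw [mul_pow, ← rpow_natCast (_ ^ _) m, ← rpow_natCast (_ ^ _) m, ← rpow_mul (by positivity),
      ← rpow_mul (by positivity), ← rpow_natCast d 2, ← rpow_mul hd.le]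
    rw [← div_rpow hM.le ha.le, show (1 : ℝ) / n * m = 1 - θ by rw [hmn, hθ]; field_simp,
      show ((2 : ℕ) : ℝ) * (1 / (2 * (n : ℝ)) * m) = 1 - θ by rw [hmn, hθ]; push_cast; field_simp,
      rpow_sub hd, rpow_one]
  have hMu : M2 * u ^ θ = b ^ θ * M2 ^ (1 - θ) / d ^ θ := by
    rw [hu, div_rpow (by positivity) hM2.le, div_rpow hb.le hd.le, rpow_sub hM2, rpow_one]
    field_simp
  have haa : a = a ^ θ * a ^ (1 - θ) := by rw [← rpow_add ha]; simp
  rw [hRHS, hs, hMu, rpow_neg hM.le] at H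
  rw [mul_pow, hL]
  have h6 := two_le_six_pow hk hkn
  have e1 : (6 * √2 * c) ^ m = 6 ^ m * ((√2 * √n) ^ m * (r ^ m)⁻¹) := by
    rw [← inv_pow, ← mul_pow, ← mul_pow, hr]; congr 1; field_simp
  rw [e1]
  set P := M ^ (1 - θ)
  set Q := a ^ (1 - θ) with hQ
  set X := a ^ θ
  have hP : 0 < P := by positivity
  have hQ0 : 0 < Q := by positivity
  have hX : 0 < X := by positivity
  set D := d ^ θ
  have hD : 0 < D := by positivity
  set Z := (√2 * √(n : ℝ)) ^ m
  have hZ : 0 < Z := by positivity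
  set B := b ^ θ
  have hB : 0 < B := by positivity
  set Y := M2 ^ (1 - θ)
  have hY : 0 < Y := by positivity
  set S := r ^ m
  have hS : 0 < S := by positivity
  have hK : 0 < 2 * P * Z * d / Q := by positivity
  have H2 := mul_le_mul_of_nonneg_left H hK.le
  have l : 2 * P * Z * d / Q * (P⁻¹ * (Z⁻¹ * (a / d / 2))) = X := by
    rw [haa]; field_simp
  rw [l] at H2
  refine H2.trans ?_
  calc _ = (2 * ((n : ℝ) / k + 1)) * (Z * S⁻¹ * (P / Q * (d / D)) * B * Y) := by field_simp
    _ ≤ 6 ^ m * (Z * S⁻¹ * (P / Q * (d / D)) * B * Y) := by gcongr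
    _ = _ := by ring


lemma bdd_of_decay {n : ℕ} {f : Eucl n → ℝ} {A c : ℝ} (hA : 0 < A) (hc : 0 < c)
    (h : ∀ x, f x ≤ A * exp (-c * ‖x‖)) : BddAbove (range f) := by
  refine ⟨A, ?_⟩
  rintro _ ⟨x, rfl⟩
  refine (h x).trans ?_
  have : exp (-c * ‖x‖) ≤ 1 := by
    rw [exp_le_one_iff]; nlinarith [norm_nonneg x]
  nlinarith

lemma supNorm_pos {n : ℕ} {f : Eucl n → ℝ} (hb : BddAbove (range f))
    (hpos : 0 < ∫ x, f x) : 0 < supNorm f := by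
  by_contra hcon
  have h : ∫ x, f x ≤ 0 := by
    apply integral_nonpos
    intro x
    exact (le_ciSup hb x).trans (not_lt.1 hcon)
  linarith

lemma power_pos {n : ℕ} {f : Eucl n → ℝ} (h0 : ∀ x, 0 ≤ f x) {p : ℝ} (hp : 0 < p)
    (hi : Integrable (fun x => f x ^ p)) (hfi : Integrable f) (hpos : 0 < ∫ x, f x) :
    0 < ∫ x, f x ^ p := by
  rw [integral_pos_iff_support_of_nonneg (fun x => rpow_nonneg (h0 x) p) hi]
  rw [integral_pos_iff_support_of_nonneg h0 hfi] at hpos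
  have : Function.support (fun x => f x ^ p) = Function.support f := by
    ext x
    simp only [Function.mem_support, ne_eq, rpow_eq_zero (h0 x) hp.ne']
  rwa [this]

theorem functional_busemann_petty :
    ∃ C : ℝ, 0 < C ∧ ∀ (n k : ℕ), 1 ≤ k → k < n →
      ∀ f₁ f₂ : Eucl n → ℝ, MemQ0 f₁ → MemQ0 f₂ →
        (∀ H : Submodule ℝ (Eucl n), Module.finrank ℝ H = k →
          sectL1 f₁ H ≤ sectL1 f₂ H) →
        (∀ i : Fin n, (∫ x, f₁ x ^ ((n : ℝ) / k) * x i) = 0) →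
        lpNorm ((n : ℝ) / k) f₁ ≤
          (C * isoConst (fun x => f₁ x ^ ((n : ℝ) / k))) ^ (n - k) *
            (∫ x, f₂ x) ^ ((k : ℝ) / n) * supNorm f₂ ^ (((n : ℝ) - k) / n) := by
  refine ⟨6 * √2 * √(2 * π * exp 1), by positivity, ?_⟩
  intro n k hk hkn f₁ f₂ h1 h2 hBP hcent
  have hn : (0 : ℝ) < n := by exact_mod_cast (by omega : 0 < n)
  have hk0 : (0 : ℝ) < k := by exact_mod_cast hk
  have hknR : (k : ℝ) < n := by exact_mod_cast hkn
  have hp : 0 < (n : ℝ) / k := by positivity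
  obtain ⟨A, c, hA, hc, hdec⟩ := exp_decay h1
  obtain ⟨A2, c2, hA2, hc2, hdec2⟩ := exp_decay h2
  have hm1 : Measurable f₁ := h1.2.2.1.measurable
  have hm2 : Measurable f₂ := h2.2.2.1.measurable
  set g : Eucl n → ℝ := fun x => f₁ x ^ ((n : ℝ) / k) with hg
  have hg0 : ∀ x, 0 ≤ g x := fun x => rpow_nonneg (h1.1 x) _
  have hgm : Measurable g := hm1.pow_const _
  have hA' : 0 < A ^ ((n : ℝ) / k) := by positivity
  have hc' : 0 < c * ((n : ℝ) / k) := by positivity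
  have hgdec : ∀ x, g x ≤ A ^ ((n : ℝ) / k) * exp (-(c * ((n : ℝ) / k)) * ‖x‖) := by
    intro x
    calc g x ≤ (A * exp (-c * ‖x‖)) ^ ((n : ℝ) / k) := rpow_le_rpow (h1.1 x) (hdec x) hp.le
      _ = _ := by
        rw [mul_rpow hA.le (exp_pos _).le, ← exp_mul]; congr 2; ring
  have hgi : Integrable g := by
    have := (integrable_exp_decay (volume : Measure (Eucl n)) hc' 0).const_mul (A ^ ((n : ℝ) / k))
    refine this.mono' hgm.aestronglyMeasurable (ae_of_all _ fun x => ?_)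
    rw [norm_of_nonneg (hg0 x)]
    simpa using hgdec x
  have hI1 : 0 < ∫ x, g x := power_pos h1.1 hp hgi h1.2.2.2.1 h1.2.2.2.2
  have hI2 : 0 < ∫ x, f₂ x := h2.2.2.2.2
  have hgb : BddAbove (range g) := bdd_of_decay hA' hc' hgdec
  have h2b : BddAbove (range f₂) := bdd_of_decay hA2 hc2 hdec2
  have hM : 0 < supNorm g := supNorm_pos hgb hI1
  have hM2 : 0 < supNorm f₂ := supNorm_pos h2b hI2
  obtain ⟨T, d, hd, hdd, hTd, hi2, hint2⟩ := covariance_data hg0 hgm hc' hgdec hI1 hcent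
  have hdet : LinearMap.det T ≠ 0 := by
    intro h; rw [h, abs_zero] at hTd; linarith
  have hinj : Function.Injective T := by
    have := (LinearMap.equivOfDetNeZero T hdet).injective
    exact this
  have hTm : Measurable T := T.continuous_of_finiteDimensional.measurable
  have hsg : ∀ x, supNorm g ^ (-(((n : ℝ) - k) / n)) * g x ≤ f₁ x := by
    intro x
    have hx : f₁ x = g x ^ ((k : ℝ) / n) := by
      simp only [hg]
      rw [← rpow_mul (h1.1 x)]
      field_simp
      simp
    rcases (hg0 x).eq_or_lt with h | h
    · rw [← h]; simpa using h1.1 x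
    · rw [hx, rpow_neg hM.le, inv_mul_le_iff₀ (by positivity)]
      calc g x = g x ^ (((n : ℝ) - k) / n) * g x ^ ((k : ℝ) / n) := by
            rw [← rpow_add h, ← add_div, sub_add_cancel, div_self hn.ne', rpow_one]
        _ ≤ _ := by
            gcongr
            · exact le_ciSup hgb x
  have hJ : ∫ z, g (T z) = (∫ x, g x) / d := by
    rw [integral_comp_lin T hdet hgm, hTd, inv_mul_eq_div]
  have hI : ∫ z, f₂ (T z) = (∫ x, f₂ x) / d := by
    rw [integral_comp_lin T hdet hm2, hTd, inv_mul_eq_div]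
  have hcpos : 0 < √(2 * π * exp 1) := by positivity
  have low := lower_bound (n := n) (by omega) (m := ((n - k : ℕ) : ℝ)) (Nat.cast_nonneg _)
    (G := fun z => g (T z)) (F := fun z => f₁ (T z)) (fun z => hg0 _)
    (s := supNorm g ^ (-(((n : ℝ) - k) / n))) (by positivity) (fun z => hsg _)
    (integrable_comp_lin T hdet hgm hgi) hi2 hJ hint2
  have mid := weighted_transfer hk hkn h1 h2 hBP T hinj
  obtain ⟨R, hR⟩ : ∃ R : ℝ, R = (√n / √(2 * π * exp 1)) *
    ((∫ x, f₂ x) / d / supNorm f₂) ^ ((1 : ℝ) / n) := ⟨_, rfl⟩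
  have hR0 : 0 < R := by rw [hR]; positivity
  have hf2i : ∫⁻ z, ENNReal.ofReal (f₂ (T z)) = ENNReal.ofReal ((∫ x, f₂ x) / d) := by
    rw [← hI, ofReal_integral_eq_lintegral_ofReal (integrable_comp_lin T hdet hm2 h2.2.2.2.1)
      (ae_of_all _ fun z => h2.1 _)]
  have up := upper_bound hk hkn (F := fun z => f₂ (T z)) (hm2.comp hTm) hM2
    (fun z => le_ciSup h2b _) (by positivity) hR0 (by positivity) hf2i
    (ball_volume_le (n := n) (by omega))
  have key := (low.trans mid).trans up
  rw [ENNReal.ofReal_le_ofReal_iff (by positivity)] at key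
  have fin := final_arith hk hkn hI1 hI2 hM hM2 hd hcpos hR key
  have e : (1 : ℝ) / ((n : ℝ) / k) = k / n := by rw [one_div_div]
  unfold _root_.lpNorm isoConst
  rw [e, ← hdd]
  exact fin
end
end

section
/- There is an absolute constant C > 0 with the following property: for all integers n > k ≥ 1 and all f₁, f₂ ∈ Q₀ⁿ satisfying the Busemann–Petty condition ∫_H f₁ dλ_H ≤ ∫_H f₂ dλ_H for every k-dimensional linear subspace H ⊆ ℝⁿ, and such that f₁ is centered (∫_{ℝⁿ} x f₁(x) dx = 0), one has ‖f₁‖₁^{k/n} · ‖f₁‖_∞^{(n−k)/n} ≤ (C·L_{f₁})^{n−k} · ‖f₂‖₁^{k/n} · ‖f₂‖_∞^{(n−k)/n}, where L_{f₁} is the isotropic constant of f₁. -/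
open MeasureTheory

noncomputable section

open scoped Pointwise in
lemma bm_image (t c : ℝ) (ht : 0 < t) (K : Set ℝ) :
    volume ((fun x => t * x + c) '' K) = ENNReal.ofReal t * volume K := by
  have : (fun x => t * x + c) '' K = (fun x => x + (-c)) ⁻¹' (t • K) := by
    ext y
    simp only [Set.mem_image, Set.mem_preimage, Set.mem_smul_set, smul_eq_mul]
    constructor
    · rintro ⟨x, hx, rfl⟩; exact ⟨x, hx, by ring⟩
    · rintro ⟨x, hx, h⟩; exact ⟨x, hx, by linarith⟩
  rw [this, measure_preimage_add_right, Measure.addHaar_smul]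
  simp [abs_of_pos ht]

lemma bm_compact (t : ℝ) (h0 : 0 < t) (h1 : t < 1) (K L C : Set ℝ) (hK : IsCompact K)
    (hL : IsCompact L) (hKn : K.Nonempty) (hLn : L.Nonempty)
    (h : ∀ x ∈ K, ∀ y ∈ L, t * x + (1 - t) * y ∈ C) :
    ENNReal.ofReal t * volume K + ENNReal.ofReal (1 - t) * volume L ≤ volume C := by
  have hs : 0 < 1 - t := by linarith
  obtain ⟨a, haK, ha⟩ := hK.exists_isGreatest hKn
  obtain ⟨b, hbL, hb⟩ := hL.exists_isLeast hLn
  rw [← bm_image t ((1 - t) * b) h0 K, ← bm_image (1 - t) (t * a) hs L]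
  rw [← measure_union₀]
  · apply measure_mono
    rintro z (⟨x, hx, rfl⟩ | ⟨y, hy, rfl⟩)
    · exact h x hx b hbL
    · have := h a haK y hy
      simpa [add_comm] using this
  · exact ((hL.image (by fun_prop)).measurableSet).nullMeasurableSet
  · refine measure_mono_null (t := {t * a + (1 - t) * b}) ?_ (by simp)
    rintro z ⟨⟨x, hx, rfl⟩, ⟨y, hy, hxy⟩⟩
    simp only at hxy
    have h3 : x ≤ a := ha hx
    have h4 : b ≤ y := hb hy
    have h5 := mul_le_mul_of_nonneg_left h3 h0.le
    have h6 := mul_le_mul_of_nonneg_left h4 hs.le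
    simp only [Set.mem_singleton_iff]
    linarith

lemma bm_meas (t : ℝ) (h0 : 0 < t) (h1 : t < 1) (A B C : Set ℝ) (hA : MeasurableSet A)
    (hB : MeasurableSet B) (hAn : A.Nonempty) (hBn : B.Nonempty)
    (h : ∀ x ∈ A, ∀ y ∈ B, t * x + (1 - t) * y ∈ C) :
    ENNReal.ofReal t * volume A + ENNReal.ofReal (1 - t) * volume B ≤ volume C := by
  obtain ⟨a, ha⟩ := hAn
  obtain ⟨b, hb⟩ := hBn
  have key : ∀ K ⊆ A, IsCompact K → ∀ L ⊆ B, IsCompact L →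
      ENNReal.ofReal t * volume K + ENNReal.ofReal (1 - t) * volume L ≤ volume C := by
    intro K hK hKc L hL hLc
    have := bm_compact t h0 h1 (insert a K) (insert b L) C (hKc.insert a) (hLc.insert b)
      (by simp) (by simp) (fun x hx y hy => h x (Set.insert_subset ha hK hx) y
        (Set.insert_subset hb hL hy))
    refine le_trans ?_ this
    gcongr <;> exact Set.subset_insert _ _
  have e1 := hA.measure_eq_iSup_isCompact volume
  have e2 := hB.measure_eq_iSup_isCompact volume
  have n1 : ENNReal.ofReal t ≠ 0 := by simpa using h0
  have n2 : ENNReal.ofReal (1 - t) ≠ 0 := by simpa using h1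
  have step : ∀ L ⊆ B, IsCompact L →
      ENNReal.ofReal t * volume A + ENNReal.ofReal (1 - t) * volume L ≤ volume C := by
    intro L hL hLc
    by_cases hle : ENNReal.ofReal (1 - t) * volume L ≤ volume C
    · have hfin : ENNReal.ofReal (1 - t) * volume L ≠ ⊤ :=
        ENNReal.mul_ne_top ENNReal.ofReal_ne_top hLc.measure_lt_top.ne
      rw [e1]
      simp only [ENNReal.mul_iSup]
      apply ENNReal.le_sub_iff_add_le_right hfin hle |>.1
      refine iSup_le fun K => iSup_le fun hK => iSup_le fun hKc => ?_
      exact (ENNReal.le_sub_iff_add_le_right hfin hle).2 (key K hK hKc L hL hLc)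
    · exfalso
      apply hle
      have := key ∅ (by simp) isCompact_empty L hL hLc
      simpa using this
  by_cases hfin : ENNReal.ofReal t * volume A = ⊤
  · have := step ∅ (by simp) isCompact_empty
    rw [hfin] at this
    simp at this
    rw [this]; exact le_top
  have hle : ENNReal.ofReal t * volume A ≤ volume C := by
    simpa using step ∅ (by simp) isCompact_empty
  rw [e2]
  simp only [ENNReal.mul_iSup]
  apply ENNReal.le_sub_iff_add_le_left hfin hle |>.1
  refine iSup_le fun L => iSup_le fun hL => iSup_le fun hLc => ?_
  exact (ENNReal.le_sub_iff_add_le_left hfin hle).2 (step L hL hLc)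

lemma pl_norm (t : ℝ) (h0 : 0 < t) (h1 : t < 1) (f g h : ℝ → ℝ) (hf : Measurable f)
    (hg : Measurable g) (hh : Measurable h) (f0 : ∀ x, 0 ≤ f x) (g0 : ∀ x, 0 ≤ g x)
    (hh0 : ∀ x, 0 ≤ h x) (f1 : ∀ x, f x ≤ 1) (g1 : ∀ x, g x ≤ 1)
    (fs : ∀ s < 1, ∃ x, s < f x) (gs : ∀ s < 1, ∃ x, s < g x)
    (H : ∀ x y, f x ^ t * g y ^ (1 - t) ≤ h (t * x + (1 - t) * y)) :
    ENNReal.ofReal t * (∫⁻ x, ENNReal.ofReal (f x)) +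
      ENNReal.ofReal (1 - t) * (∫⁻ x, ENNReal.ofReal (g x)) ≤ ∫⁻ x, ENNReal.ofReal (h x) := by
  rw [lintegral_eq_lintegral_meas_lt volume (Filter.Eventually.of_forall f0) hf.aemeasurable,
    lintegral_eq_lintegral_meas_lt volume (Filter.Eventually.of_forall g0) hg.aemeasurable,
    lintegral_eq_lintegral_meas_lt volume (Filter.Eventually.of_forall hh0) hh.aemeasurable]
  rw [← lintegral_const_mul' _ _ ENNReal.ofReal_ne_top,
    ← lintegral_const_mul' _ _ ENNReal.ofReal_ne_top, ← lintegral_add_left]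
  swap
  · apply Measurable.const_mul
    apply Antitone.measurable
    intro a b hab
    apply measure_mono
    intro x (hx : b < f x)
    exact lt_of_le_of_lt hab hx
  apply lintegral_mono_ae
  filter_upwards [ae_restrict_mem measurableSet_Ioi] with s (hs : 0 < s)
  by_cases hs1 : s < 1
  · refine bm_meas t h0 h1 _ _ _ (measurableSet_lt measurable_const hf)
      (measurableSet_lt measurable_const hg) (fs s hs1) (gs s hs1) ?_
    intro x (hx : s < f x) y (hy : s < g y)
    refine lt_of_lt_of_le ?_ (H x y)
    have e : s = s ^ t * s ^ (1 - t) := by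
      rw [← Real.rpow_add hs]; simp
    calc s = s ^ t * s ^ (1 - t) := e
      _ < f x ^ t * g y ^ (1 - t) := by
        apply mul_lt_mul'' (Real.rpow_lt_rpow hs.le hx h0)
          (Real.rpow_lt_rpow hs.le hy (by linarith)) (by positivity) (by positivity)
  · have e1 : {a | s < f a} = ∅ := by
      ext x; simp; linarith [f1 x]
    have e2 : {a | s < g a} = ∅ := by
      ext x; simp; linarith [g1 x]
    simp [e1, e2]

lemma ennreal_amgm (t : ℝ) (h0 : 0 < t) (h1 : t < 1) (a b : ENNReal) :
    a ^ t * b ^ (1 - t) ≤ ENNReal.ofReal t * a + ENNReal.ofReal (1 - t) * b := by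
  have n1 : ENNReal.ofReal t ≠ 0 := by simpa using h0
  have n2 : ENNReal.ofReal (1 - t) ≠ 0 := by simpa using h1
  by_cases ha : a = ⊤
  · simp [ha, ENNReal.mul_top n1]
  by_cases hb : b = ⊤
  · simp [hb, ENNReal.mul_top n2]
  lift a to NNReal using ha
  lift b to NNReal using hb
  rw [← ENNReal.coe_rpow_of_nonneg _ h0.le, ← ENNReal.coe_rpow_of_nonneg _ (by linarith : 0 ≤ 1 - t)]
  have := NNReal.geom_mean_le_arith_mean2_weighted t.toNNReal (1 - t).toNNReal a b (by
    rw [← Real.toNNReal_add h0.le (by linarith)]; simp)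
  rw [Real.coe_toNNReal _ h0.le, Real.coe_toNNReal _ (by linarith : 0 ≤ 1 - t)] at this
  have h2 := ENNReal.coe_le_coe.2 this
  push_cast at h2
  exact h2

lemma pl_bdd (t : ℝ) (h0 : 0 < t) (h1 : t < 1) (f g h : ℝ → ENNReal) (hf : Measurable f)
    (hg : Measurable g) (hh : Measurable h) (fb : (⨆ x, f x) ≠ ⊤) (gb : (⨆ x, g x) ≠ ⊤)
    (H : ∀ x y, f x ^ t * g y ^ (1 - t) ≤ h (t * x + (1 - t) * y)) :
    (∫⁻ x, f x) ^ t * (∫⁻ x, g x) ^ (1 - t) ≤ ∫⁻ x, h x := by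
  have h1' : 0 < 1 - t := by linarith
  set a := ⨆ x, f x with ha
  set b := ⨆ x, g x with hb
  by_cases a0 : a = 0
  · have : ∀ x, f x = 0 := fun x => le_antisymm (a0 ▸ le_iSup f x) bot_le
    simp [this, ENNReal.zero_rpow_of_pos h0]
  by_cases b0 : b = 0
  · have : ∀ x, g x = 0 := fun x => le_antisymm (b0 ▸ le_iSup g x) bot_le
    simp [this, ENNReal.zero_rpow_of_pos h1']
  set c := a ^ t * b ^ (1 - t) with hc
  have c0 : c ≠ 0 := by
    simp only [hc, ne_eq, mul_eq_zero, ENNReal.rpow_eq_zero_iff, a0, b0, fb, gb]; simp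
  have ct : c ≠ ⊤ := ENNReal.mul_ne_top (ENNReal.rpow_ne_top_of_nonneg h0.le fb)
      (ENNReal.rpow_ne_top_of_nonneg h1'.le gb)
  have fa : ∀ x, f x / a ≤ 1 := fun x => ENNReal.div_le_of_le_mul (by simpa using le_iSup f x)
  have ga : ∀ x, g x / b ≤ 1 := fun x => ENNReal.div_le_of_le_mul (by simpa using le_iSup g x)
  have ft : ∀ x, f x / a ≠ ⊤ := fun x => ne_top_of_le_ne_top ENNReal.one_ne_top (fa x)
  have gt : ∀ x, g x / b ≠ ⊤ := fun x => ne_top_of_le_ne_top ENNReal.one_ne_top (ga x)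
  have ht : ∀ x, min (h x / c) 1 ≠ ⊤ := fun x => ne_top_of_le_ne_top ENNReal.one_ne_top (min_le_right _ _)
  have main := pl_norm t h0 h1 (fun x => (f x / a).toReal) (fun x => (g x / b).toReal)
    (fun x => (min (h x / c) 1).toReal) (by fun_prop) (by fun_prop) (by fun_prop)
    (fun x => ENNReal.toReal_nonneg) (fun x => ENNReal.toReal_nonneg)
    (fun x => ENNReal.toReal_nonneg)
    (fun x => by simpa using ENNReal.toReal_mono ENNReal.one_ne_top (fa x))
    (fun x => by simpa using ENNReal.toReal_mono ENNReal.one_ne_top (ga x)) ?_ ?_ ?_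
  · simp only [ENNReal.ofReal_toReal (ft _), ENNReal.ofReal_toReal (gt _),
      ENNReal.ofReal_toReal (ht _)] at main
    have ef : ∫⁻ x, f x = a * ∫⁻ x, f x / a := by
      rw [← lintegral_const_mul' _ _ fb]
      congr 1; ext x; rw [ENNReal.mul_div_cancel a0 fb]
    have eg : ∫⁻ x, g x = b * ∫⁻ x, g x / b := by
      rw [← lintegral_const_mul' _ _ gb]
      congr 1; ext x; rw [ENNReal.mul_div_cancel b0 gb]
    calc (∫⁻ x, f x) ^ t * (∫⁻ x, g x) ^ (1 - t)
        = c * ((∫⁻ x, f x / a) ^ t * (∫⁻ x, g x / b) ^ (1 - t)) := by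
          rw [ef, eg, ENNReal.mul_rpow_of_nonneg _ _ h0.le, ENNReal.mul_rpow_of_nonneg _ _ h1'.le, hc]
          ring
      _ ≤ c * ∫⁻ x, min (h x / c) 1 := by
          gcongr
          exact (ennreal_amgm t h0 h1 _ _).trans main
      _ = ∫⁻ x, c * min (h x / c) 1 := by rw [lintegral_const_mul' _ _ ct]
      _ ≤ ∫⁻ x, h x := by
          apply lintegral_mono
          intro x
          calc c * min (h x / c) 1 ≤ c * (h x / c) := by gcongr; exact min_le_left _ _
            _ = h x := ENNReal.mul_div_cancel c0 ct
  · intro s hs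
    by_cases s0 : s < 0
    · exact ⟨0, s0.trans_le ENNReal.toReal_nonneg⟩
    push Not at s0
    have : ENNReal.ofReal s * a < a := by
      conv_rhs => rw [← one_mul a]
      exact ENNReal.mul_lt_mul_left a0 fb (by simpa using hs)
    obtain ⟨x, hx⟩ := lt_iSup_iff.1 (ha ▸ this)
    refine ⟨x, (ENNReal.ofReal_lt_iff_lt_toReal s0 (ft x)).1 ?_⟩
    rw [ENNReal.lt_div_iff_mul_lt (Or.inl a0) (Or.inl fb)]
    exact hx
  · intro s hs
    by_cases s0 : s < 0
    · exact ⟨0, s0.trans_le ENNReal.toReal_nonneg⟩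
    push Not at s0
    have : ENNReal.ofReal s * b < b := by
      conv_rhs => rw [← one_mul b]
      exact ENNReal.mul_lt_mul_left b0 gb (by simpa using hs)
    obtain ⟨x, hx⟩ := lt_iSup_iff.1 (hb ▸ this)
    refine ⟨x, (ENNReal.ofReal_lt_iff_lt_toReal s0 (gt x)).1 ?_⟩
    rw [ENNReal.lt_div_iff_mul_lt (Or.inl b0) (Or.inl gb)]
    exact hx
  · intro x y
    rw [ENNReal.toReal_rpow, ENNReal.toReal_rpow, ← ENNReal.toReal_mul]
    apply ENNReal.toReal_mono (ht _)
    refine le_min ?_ ?_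
    · rw [ENNReal.div_rpow_of_nonneg _ _ h0.le, ENNReal.div_rpow_of_nonneg _ _ h1'.le]
      rw [ENNReal.le_div_iff_mul_le (Or.inl c0) (Or.inl ct)]
      refine le_trans (le_of_eq ?_) (H x y)
      have q1 : a ^ t ≠ 0 := by simp [a0, fb]
      have q2 : b ^ (1 - t) ≠ 0 := by simp [b0, gb]
      have q3 : a ^ t ≠ ⊤ := ENNReal.rpow_ne_top_of_nonneg h0.le fb
      have q4 : b ^ (1 - t) ≠ ⊤ := ENNReal.rpow_ne_top_of_nonneg h1'.le gb
      calc f x ^ t / a ^ t * (g y ^ (1 - t) / b ^ (1 - t)) * c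
          = (a ^ t * (f x ^ t / a ^ t)) * (b ^ (1 - t) * (g y ^ (1 - t) / b ^ (1 - t))) := by
            rw [hc]; ring
        _ = _ := by rw [ENNReal.mul_div_cancel q1 q3, ENNReal.mul_div_cancel q2 q4]
    · calc _ ≤ (1:ENNReal) ^ t * 1 ^ (1 - t) := by gcongr; exacts [fa x, ga y]
        _ = 1 := by simp

lemma pl_one (t : ℝ) (h0 : 0 < t) (h1 : t < 1) (f g h : ℝ → ENNReal) (hf : Measurable f)
    (hg : Measurable g) (hh : Measurable h)
    (H : ∀ x y, f x ^ t * g y ^ (1 - t) ≤ h (t * x + (1 - t) * y)) :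
    (∫⁻ x, f x) ^ t * (∫⁻ x, g x) ^ (1 - t) ≤ ∫⁻ x, h x := by
  have h1' : 0 < 1 - t := by linarith
  have trunc : ∀ (f : ℝ → ENNReal) (hf : Measurable f) (s : ℝ) (hs : 0 < s),
      (∫⁻ x, f x) ^ s = ⨆ N : ℕ, (∫⁻ x, min (f x) N) ^ s := by
    intro f hf s hs
    have : ∀ x, f x = ⨆ N : ℕ, min (f x) N := by
      intro x
      rw [← inf_iSup_eq, ENNReal.iSup_natCast]; simp
    conv_lhs => enter [1, 2, x]; rw [this x]
    rw [lintegral_iSup (fun n => by fun_prop) (by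
      intro a b hab x; simp only; gcongr)]
    exact (ENNReal.orderIsoRpow s hs).map_iSup _
  rw [trunc f hf t h0, trunc g hg _ h1', ENNReal.iSup_mul]
  refine iSup_le fun N => ?_
  rw [ENNReal.mul_iSup]
  refine iSup_le fun M => ?_
  apply pl_bdd t h0 h1 _ _ _ (by fun_prop) (by fun_prop) hh
  · exact ne_top_of_le_ne_top (ENNReal.natCast_ne_top N) (iSup_le fun x => min_le_right _ _)
  · exact ne_top_of_le_ne_top (ENNReal.natCast_ne_top M) (iSup_le fun x => min_le_right _ _)
  · intro x y
    refine le_trans ?_ (H x y)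
    gcongr <;> exact min_le_left _ _

lemma lintegral_insertNth {n : ℕ} (i : Fin (n + 1)) (F : (Fin (n + 1) → ℝ) → ENNReal)
    (hF : Measurable F) :
    ∫⁻ x, F x = ∫⁻ t : ℝ, ∫⁻ y : Fin n → ℝ, F (i.insertNth t y) := by
  have mp := (volume_preserving_piFinSuccAbove (fun _ : Fin (n + 1) => ℝ) i).symm
  rw [← mp.lintegral_comp hF]
  have hm : Measurable fun p : ℝ × (Fin n → ℝ) =>
      F ((MeasurableEquiv.piFinSuccAbove (fun _ : Fin (n + 1) => ℝ) i).symm p) :=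
    hF.comp (MeasurableEquiv.measurable _)
  have : (volume : Measure (ℝ × (Fin n → ℝ))) = Measure.prod volume volume := rfl
  rw [this, lintegral_prod _ hm.aemeasurable]
  rfl

lemma measurable_insertNth {n : ℕ} (i : Fin (n + 1)) :
    Measurable fun p : ℝ × (Fin n → ℝ) => (i.insertNth p.1 p.2 : Fin (n + 1) → ℝ) :=
  (MeasurableEquiv.piFinSuccAbove (fun _ : Fin (n + 1) => ℝ) i).symm.measurable

lemma insertNth_comb {n : ℕ} (i : Fin (n + 1)) (s r a b : ℝ) (x y : Fin n → ℝ) :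
    (i.insertNth (s * a + r * b) (s • x + r • y) : Fin (n + 1) → ℝ) =
      s • (i.insertNth a x : Fin (n + 1) → ℝ) + r • (i.insertNth b y : Fin (n + 1) → ℝ) := by
  ext j
  refine Fin.succAboveCases i ?_ (fun j => ?_) j <;> simp

lemma pl_pi (t : ℝ) (h0 : 0 < t) (h1 : t < 1) (n : ℕ) : ∀ (f g h : (Fin n → ℝ) → ENNReal),
    Measurable f → Measurable g → Measurable h →
    (∀ x y, f x ^ t * g y ^ (1 - t) ≤ h (t • x + (1 - t) • y)) →
    (∫⁻ x, f x) ^ t * (∫⁻ x, g x) ^ (1 - t) ≤ ∫⁻ x, h x := by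
  induction n with
  | zero =>
    intro f g h hf hg hh H
    have e : ∀ f : (Fin 0 → ℝ) → ENNReal, ∫⁻ x, f x = f 0 := by
      intro f
      have : f = fun _ => f 0 := by ext x; congr 1; exact Subsingleton.elim _ _
      rw [this, lintegral_const]
      simp [volume_pi]
    rw [e, e, e]
    refine (H 0 0).trans (le_of_eq ?_)
    congr 1; exact Subsingleton.elim _ _
  | succ n ih =>
    intro f g h hf hg hh H
    rw [lintegral_insertNth 0 f hf, lintegral_insertNth 0 g hg, lintegral_insertNth 0 h hh]
    have hm : ∀ f : (Fin (n + 1) → ℝ) → ENNReal, Measurable f → Measurable fun p : ℝ × (Fin n → ℝ) =>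
      f ((0 : Fin (n + 1)).insertNth p.1 p.2) := fun f hf => hf.comp (measurable_insertNth 0)
    apply pl_one t h0 h1 _ _ _ (hm f hf).lintegral_prod_right (hm g hg).lintegral_prod_right
      (hm h hh).lintegral_prod_right
    intro a b
    apply ih _ _ _ ((hm f hf).comp (by fun_prop : Measurable fun y => (a, y)))
      ((hm g hg).comp (by fun_prop : Measurable fun y => (b, y)))
      ((hm h hh).comp (by fun_prop : Measurable fun y => (t * a + (1 - t) * b, y)))
    intro x y
    simp only [Function.comp]
    rw [insertNth_comb]
    exact H _ _

/-- Log-concavity for extended nonnegative functions. -/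
def LC {E : Type*} [AddCommGroup E] [Module ℝ E] (F : E → ENNReal) : Prop :=
  ∀ x y : E, ∀ t : ℝ, 0 < t → t < 1 → F x ^ t * F y ^ (1 - t) ≤ F (t • x + (1 - t) • y)

lemma exists_level {α : Type*} [MeasurableSpace α] (μ : Measure α) (F : α → ENNReal)
    (h0 : ∫⁻ x, F x ∂μ ≠ 0) : ∃ n : ℕ, μ {x | ((n : ENNReal) + 1)⁻¹ ≤ F x} ≠ 0 := by
  by_contra hcon
  push Not at hcon
  apply h0
  have : μ (⋃ n : ℕ, {x | ((n : ENNReal) + 1)⁻¹ ≤ F x}) = 0 := measure_iUnion_null hcon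
  have h2 : F =ᵐ[μ] 0 := by
    rw [Filter.EventuallyEq, ae_iff]
    refine measure_mono_null ?_ this
    intro x (hx : F x ≠ 0)
    obtain ⟨n, hn⟩ := ENNReal.exists_inv_nat_lt hx
    refine Set.mem_iUnion.2 ⟨n, le_trans ?_ hn.le⟩
    exact ENNReal.inv_le_inv.2 (by simp)
  rw [lintegral_congr_ae h2]; simp

lemma LC.bdd {E : Type*} [NormedAddCommGroup E] [NormedSpace ℝ E] [FiniteDimensional ℝ E]
    [MeasurableSpace E] [BorelSpace E] (μ : Measure E) [μ.IsAddHaarMeasure] {F : E → ENNReal}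
    (hF : LC F) (hm : Measurable F) (h0 : ∫⁻ x, F x ∂μ ≠ 0) (ht : ∫⁻ x, F x ∂μ ≠ ⊤) :
    ∃ B : ENNReal, B ≠ ⊤ ∧ ∀ x, F x ≤ B := by
  obtain ⟨n, hn⟩ := exists_level μ F h0
  set ε : ENNReal := ((n : ENNReal) + 1)⁻¹ with hε
  set K := {x | ε ≤ F x} with hK
  have ε0 : ε ≠ 0 := by simp [hε]
  have εt : ε ≠ ⊤ := by simp [hε]
  set c := ENNReal.ofReal |(1/2 : ℝ) ^ Module.finrank ℝ E| * μ K with hc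
  have c0 : c ≠ 0 := by
    apply mul_ne_zero _ hn
    simp
  set I := ∫⁻ x, F x ∂μ with hI
  have e0 : ε ^ (1 - 1/2 : ℝ) ≠ 0 := by simp [ε0, εt]
  refine ⟨(I / (ε ^ (1 - 1/2 : ℝ) * c)) ^ (2 : ℝ), ?_, ?_⟩
  · exact ENNReal.rpow_ne_top_of_nonneg (by norm_num)
      (ENNReal.div_ne_top ht (mul_ne_zero e0 c0))
  · intro x
    have key : F x ^ (1/2 : ℝ) * (ε ^ (1 - 1/2 : ℝ) * c) ≤ I := by
      rw [← mul_assoc, hc, ← Measure.addHaar_image_homothety μ x (1/2 : ℝ) K]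
      refine le_trans ?_ (mul_meas_ge_le_lintegral hm (F x ^ (1/2 : ℝ) * ε ^ (1 - 1/2 : ℝ)))
      gcongr
      rintro z ⟨y, hy, rfl⟩
      have h1 := hF x y (1/2) (by norm_num) (by norm_num)
      have h2 : AffineMap.homothety x (1/2 : ℝ) y = (1/2 : ℝ) • x + (1 - 1/2 : ℝ) • y := by
        rw [AffineMap.homothety_apply]
        simp only [vsub_eq_sub, vadd_eq_add]
        module
      show _ ≤ F _
      rw [h2]
      refine le_trans ?_ h1
      gcongr
      exact hy
    have k2 : F x ^ (1/2 : ℝ) ≤ I / (ε ^ (1 - 1/2 : ℝ) * c) := by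
      rw [ENNReal.le_div_iff_mul_le (Or.inl (mul_ne_zero e0 c0)) (Or.inr ht)]
      exact key
    calc F x = (F x ^ (1/2 : ℝ)) ^ (2 : ℝ) := by rw [← ENNReal.rpow_mul]; norm_num
      _ ≤ _ := by gcongr

lemma LC.tail {h : ℝ → ENNReal} (hh : LC h) (m A : ℝ) (hm : 0 < m)
    (hA : 0 < A) (hI : ∫⁻ t, h t ≤ ENNReal.ofReal m) (h0 : h 0 = ENNReal.ofReal A) (t : ℝ)
    (ht : 3 * m / A ≤ t) : h t ≤ ENNReal.ofReal (A * Real.exp (-t / (3 * m / A))) := by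
  by_contra hcon
  push Not at hcon
  set r := 3 * m / A with hr
  have r0 : 0 < r := by positivity
  have t0 : 0 < t := by linarith
  have key : ∀ u ∈ Set.Ioo 0 r, ENNReal.ofReal (A * Real.exp (-1)) ≤ h u := by
    rintro u ⟨u0, ur⟩
    have s0 : 0 < u / t := by positivity
    have s1 : u / t < 1 := by rw [div_lt_one t0]; linarith
    have := hh t 0 (u / t) s0 s1
    have e : (u / t) • t + (1 - u / t) • (0:ℝ) = u := by
      simp only [smul_eq_mul, mul_zero, add_zero]; field_simp
    rw [e] at this
    refine le_trans ?_ this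
    rw [h0]
    calc ENNReal.ofReal (A * Real.exp (-1))
        ≤ ENNReal.ofReal ((A * Real.exp (-t / r)) ^ (u / t) * A ^ (1 - u / t)) := by
          apply ENNReal.ofReal_le_ofReal
          rw [Real.mul_rpow hA.le (Real.exp_pos _).le, mul_right_comm, ← Real.rpow_add hA,
            ← Real.exp_mul]
          have e2 : u / t + (1 - u / t) = 1 := by ring
          rw [e2, Real.rpow_one]
          gcongr
          have : -t / r * (u / t) = - (u / r) := by field_simp
          rw [this]
          have : u / r ≤ 1 := by rw [div_le_one r0]; exact ur.le
          linarith
      _ = ENNReal.ofReal (A * Real.exp (-t / r)) ^ (u / t) * ENNReal.ofReal A ^ (1 - u / t) := by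
          rw [ENNReal.ofReal_mul (by positivity), ENNReal.ofReal_rpow_of_pos (by positivity),
            ENNReal.ofReal_rpow_of_pos hA]
      _ ≤ _ := by gcongr
  have h2 : ENNReal.ofReal (A * Real.exp (-1)) * ENNReal.ofReal r ≤ ENNReal.ofReal m := by
    calc ENNReal.ofReal (A * Real.exp (-1)) * ENNReal.ofReal r
        = ∫⁻ u in Set.Ioo 0 r, ENNReal.ofReal (A * Real.exp (-1)) := by simp
      _ ≤ ∫⁻ u in Set.Ioo 0 r, h u := setLIntegral_mono' measurableSet_Ioo key
      _ ≤ ∫⁻ u, h u := setLIntegral_le_lintegral _ _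
      _ ≤ _ := hI
  rw [← ENNReal.ofReal_mul (by positivity), ENNReal.ofReal_le_ofReal_iff hm.le] at h2
  have h3 : A * Real.exp (-1) * r = m * (3 * Real.exp (-1)) := by rw [hr]; field_simp
  rw [h3] at h2
  have h4 : 1 < 3 * Real.exp (-1) := by
    rw [Real.exp_neg, ← div_eq_mul_inv, one_lt_div (Real.exp_pos _)]
    exact Real.exp_one_lt_d9.trans (by norm_num)
  nlinarith

lemma LC.comp_lin {E E' : Type*} [AddCommGroup E] [Module ℝ E] [AddCommGroup E'] [Module ℝ E']
    {F : E → ENNReal} (hF : LC F) (L : E' → E)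
    (hL : ∀ x y : E', ∀ t : ℝ, L (t • x + (1 - t) • y) = t • L x + (1 - t) • L y) :
    LC (fun x => F (L x)) := by
  intro x y t h0 h1
  simp only [hL]
  exact hF _ _ t h0 h1

lemma LC.second_moment {h : ℝ → ENNReal} (hh : LC h) (hmeas : Measurable h) (m A : ℝ) (hm : 0 < m)
    (hA : 0 < A) (hI : ∫⁻ t, h t ≤ ENNReal.ofReal m) (h0 : h 0 = ENNReal.ofReal A) :
    ∫⁻ t, h t * ENNReal.ofReal (t ^ 2) ≤ ENNReal.ofReal (2500 * m ^ 3 / A ^ 2) := by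
  set r := 3 * m / A with hr
  have r0 : 0 < r := by positivity
  have tail : ∀ t, r ≤ |t| → h t ≤ ENNReal.ofReal (A * Real.exp (-|t| / r)) := by
    intro t ht
    rcases le_total 0 t with h | h
    · rw [abs_of_nonneg h] at ht ⊢
      exact hh.tail m A hm hA hI h0 t ht
    · rw [abs_of_nonpos h] at ht ⊢
      have h2 := (hh.comp_lin (fun x : ℝ => -x) (by intro x y t; simp; ring)).tail m A hm hA
        (by rw [(Measure.measurePreserving_neg volume).lintegral_comp hmeas]; exact hI) (by simpa using h0) (-t) ht
      simpa using h2
  have pt : ∀ t, h t * ENNReal.ofReal (t ^ 2) ≤ ENNReal.ofReal (r ^ 2) * h t +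
      ENNReal.ofReal (26 * A * r ^ 2 * (1 + (t / r) ^ 2)⁻¹) := by
    intro t
    rcases le_total r |t| with ht | ht
    · refine le_trans ?_ le_add_self
      calc h t * ENNReal.ofReal (t ^ 2) ≤ ENNReal.ofReal (A * Real.exp (-|t| / r)) *
          ENNReal.ofReal (t ^ 2) := by gcongr; exact tail t ht
        _ ≤ _ := by
          rw [← ENNReal.ofReal_mul (by positivity)]
          apply ENNReal.ofReal_le_ofReal
          set x := |t| / r with hx
          have x0 : 0 ≤ x := by positivity
          have e1 : t ^ 2 = r ^ 2 * x ^ 2 := by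
            rw [hx, div_pow |t| r, sq_abs]; field_simp
          have e2 : (t / r) ^ 2 = x ^ 2 := by rw [hx, div_pow t r, div_pow |t| r, sq_abs]
          have e3 : -|t| / r = -x := by rw [hx]; ring
          rw [e1, e2, e3, Real.exp_neg]
          have a1 := Real.pow_div_factorial_le_exp x x0 2
          have a2 := Real.pow_div_factorial_le_exp x x0 4
          norm_num [Nat.factorial] at a1 a2
          have ex := Real.exp_pos x
          have : x ^ 2 * (1 + x ^ 2) ≤ 26 * Real.exp x := by nlinarith
          have k : (Real.exp x)⁻¹ * x ^ 2 ≤ 26 * (1 + x ^ 2)⁻¹ := by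
            rw [inv_mul_eq_div, ← div_eq_mul_inv, div_le_div_iff₀ ex (by positivity)]
            exact this
          calc A * (Real.exp x)⁻¹ * (r ^ 2 * x ^ 2) = A * r ^ 2 * ((Real.exp x)⁻¹ * x ^ 2) := by ring
            _ ≤ A * r ^ 2 * (26 * (1 + x ^ 2)⁻¹) := by gcongr
            _ = _ := by ring
    · refine le_trans ?_ le_self_add
      rw [mul_comm]
      gcongr ENNReal.ofReal ?_ * _
      rw [← sq_abs]
      gcongr
  calc ∫⁻ t, h t * ENNReal.ofReal (t ^ 2) ≤ ∫⁻ t, (ENNReal.ofReal (r ^ 2) * h t +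
      ENNReal.ofReal (26 * A * r ^ 2 * (1 + (t / r) ^ 2)⁻¹)) := lintegral_mono pt
    _ = ENNReal.ofReal (r ^ 2) * (∫⁻ t, h t) +
      ∫⁻ t, ENNReal.ofReal (26 * A * r ^ 2 * (1 + (t / r) ^ 2)⁻¹) := by
        rw [lintegral_add_left (by fun_prop), lintegral_const_mul' _ _ ENNReal.ofReal_ne_top]
    _ ≤ ENNReal.ofReal (r ^ 2) * ENNReal.ofReal m + ENNReal.ofReal (26 * A * r ^ 2 * (r * Real.pi)) := by
        gcongr
        rw [← ofReal_integral_eq_lintegral_ofReal]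
        · rw [integral_const_mul, Measure.integral_comp_div (fun x : ℝ => (1 + x ^ 2)⁻¹),
            integral_univ_inv_one_add_sq, abs_of_pos r0]
          rfl
        · apply Integrable.const_mul
          exact integrable_inv_one_add_sq.comp_div r0.ne'
        · exact Filter.Eventually.of_forall fun t => by positivity
    _ ≤ _ := by
        rw [← ENNReal.ofReal_mul (by positivity), ← ENNReal.ofReal_add (by positivity) (by positivity)]
        apply ENNReal.ofReal_le_ofReal
        have e : r ^ 2 * m + 26 * A * r ^ 2 * (r * Real.pi) =
            (9 + 702 * Real.pi) * (m ^ 3 / A ^ 2) := by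
          rw [hr]; field_simp; ring
        have e2 : 2500 * m ^ 3 / A ^ 2 = 2500 * (m ^ 3 / A ^ 2) := by ring
        rw [e, e2]
        gcongr
        linarith [Real.pi_lt_d2]

/-- Marginal onto coordinate `i`. -/
def marg {n : ℕ} (F : (Fin (n + 1) → ℝ) → ENNReal) (i : Fin (n + 1)) (t : ℝ) : ENNReal :=
  ∫⁻ y : Fin n → ℝ, F (i.insertNth t y)

lemma measurable_marg {n : ℕ} {F : (Fin (n + 1) → ℝ) → ENNReal} (hF : Measurable F)
    (i : Fin (n + 1)) : Measurable (marg F i) :=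
  Measurable.lintegral_prod_right (f := fun t y => F (i.insertNth t y))
    (hF.comp (measurable_insertNth i))

lemma measurable_sect {n : ℕ} {F : (Fin (n + 1) → ℝ) → ENNReal} (hF : Measurable F)
    (i : Fin (n + 1)) (t : ℝ) : Measurable fun y : Fin n → ℝ => F (i.insertNth t y) :=
  (hF.comp (measurable_insertNth i)).comp (by fun_prop : Measurable fun y : Fin n → ℝ => (t, y))

lemma LC.marg {n : ℕ} {F : (Fin (n + 1) → ℝ) → ENNReal} (h : LC F) (hF : Measurable F)
    (i : Fin (n + 1)) : LC (marg F i) := by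
  intro a b t h0 h1
  apply pl_pi t h0 h1 n _ _ _ (measurable_sect hF i _) (measurable_sect hF i _)
    (measurable_sect hF i _)
  intro x y
  simp only [smul_eq_mul, insertNth_comb]
  exact h _ _ t h0 h1

lemma lintegral_marg {n : ℕ} {F : (Fin (n + 1) → ℝ) → ENNReal} (hF : Measurable F)
    (i : Fin (n + 1)) : ∫⁻ t, marg F i t = ∫⁻ x, F x := (lintegral_insertNth i F hF).symm

lemma lintegral_marg_mul {n : ℕ} {F : (Fin (n + 1) → ℝ) → ENNReal} (hF : Measurable F)
    (i : Fin (n + 1)) (φ : ℝ → ENNReal) (hφ : Measurable φ) :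
    ∫⁻ x, F x * φ (x i) = ∫⁻ t, marg F i t * φ t := by
  rw [lintegral_insertNth i _ (by fun_prop)]
  congr 1; ext t
  simp only [Fin.insertNth_apply_same]
  rw [lintegral_mul_const _ (measurable_sect hF i t)]; rfl

lemma gauss_pi {ι : Type*} [Fintype ι] (σ : ℝ) (hσ : 0 < σ) :
    Integrable (fun x : ι → ℝ => Real.exp (-Real.pi * (∑ i, x i ^ 2) / σ ^ 2)) ∧
    ∫ x : ι → ℝ, Real.exp (-Real.pi * (∑ i, x i ^ 2) / σ ^ 2) = σ ^ Fintype.card ι := by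
  have e : (fun x : ι → ℝ => Real.exp (-Real.pi * (∑ i, x i ^ 2) / σ ^ 2)) =
      fun x => ∏ i, Real.exp (-(Real.pi / σ ^ 2) * x i ^ 2) := by
    ext x
    rw [← Real.exp_sum, ← Finset.mul_sum]
    congr 1; ring
  have pos : 0 < Real.pi / σ ^ 2 := by positivity
  rw [e]
  constructor
  · exact Integrable.fintype_prod (f := fun _ t => Real.exp (-(Real.pi / σ ^ 2) * t ^ 2))
      (fun i => integrable_exp_neg_mul_sq pos)
  · rw [integral_fintype_prod_volume_eq_pow (fun t : ℝ => Real.exp (-(Real.pi / σ ^ 2) * t ^ 2)),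
      integral_gaussian]
    congr 1
    rw [show Real.pi / (Real.pi / σ ^ 2) = σ ^ 2 by field_simp]
    exact Real.sqrt_sq hσ.le

lemma jensen_bound {ι : Type*} [Fintype ι] (F : (ι → ℝ) → ENNReal) (hF : Measurable F)
    (m M σ : ℝ) (hm : 0 < m) (hM : 0 < M) (hσ : 0 < σ) (hb : ∀ x, F x ≤ ENNReal.ofReal M)
    (hI : ∫⁻ x, F x = ENNReal.ofReal m)
    (h2 : ∀ i, ∫⁻ x, F x * ENNReal.ofReal (x i ^ 2) ≤ ENNReal.ofReal (σ ^ 2 * m)) :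
    m * Real.exp (-Real.pi * Fintype.card ι) ≤ M * σ ^ Fintype.card ι := by
  set N := Fintype.card ι with hN
  set a := Real.pi * N with ha
  have a0 : 0 ≤ a := by positivity
  obtain ⟨gi, ge⟩ := gauss_pi (ι := ι) σ hσ
  have pt : ∀ x : ι → ℝ, ENNReal.ofReal (Real.exp (-a) * (1 + a)) * F x ≤
      ENNReal.ofReal M * ENNReal.ofReal (Real.exp (-Real.pi * (∑ i, x i ^ 2) / σ ^ 2)) +
      ENNReal.ofReal (Real.exp (-a) * Real.pi / σ ^ 2) * ∑ i, F x * ENNReal.ofReal (x i ^ 2) := by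
    intro x
    rw [← Finset.mul_sum, ← ENNReal.ofReal_sum_of_nonneg (fun i _ => sq_nonneg _)]
    set q := ∑ i, x i ^ 2 with hq
    have q0 : 0 ≤ q := Finset.sum_nonneg fun i _ => sq_nonneg _
    calc ENNReal.ofReal (Real.exp (-a) * (1 + a)) * F x
        ≤ ENNReal.ofReal (Real.exp (-Real.pi * q / σ ^ 2) + Real.exp (-a) * Real.pi / σ ^ 2 * q) * F x := by
          gcongr
          have h := Real.add_one_le_exp (a - Real.pi * q / σ ^ 2)
          have e : Real.exp (-Real.pi * q / σ ^ 2) = Real.exp (-a) * Real.exp (a - Real.pi * q / σ ^ 2) := by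
            rw [← Real.exp_add]; congr 1; ring
          rw [e]
          have e3 : Real.exp (-a) * Real.pi / σ ^ 2 * q = Real.exp (-a) * (Real.pi * q / σ ^ 2) := by ring
          rw [e3, ← mul_add]
          apply mul_le_mul_of_nonneg_left _ (Real.exp_pos _).le
          linarith
      _ = F x * ENNReal.ofReal (Real.exp (-Real.pi * q / σ ^ 2)) +
          ENNReal.ofReal (Real.exp (-a) * Real.pi / σ ^ 2) * (F x * ENNReal.ofReal q) := by
          rw [ENNReal.ofReal_add (by positivity) (by positivity),
            ENNReal.ofReal_mul (p := Real.exp (-a) * Real.pi / σ ^ 2) (by positivity)]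
          ring
      _ ≤ _ := by gcongr; exact hb x
  have key := lintegral_mono (μ := volume) pt
  rw [lintegral_const_mul' _ _ ENNReal.ofReal_ne_top, hI, lintegral_add_left (by fun_prop),
    lintegral_const_mul' _ _ ENNReal.ofReal_ne_top, lintegral_const_mul' _ _ ENNReal.ofReal_ne_top,
    lintegral_finsetSum _ (fun i _ => by fun_prop),
    ← ofReal_integral_eq_lintegral_ofReal gi (Filter.Eventually.of_forall fun x => (Real.exp_pos _).le),
    ge] at key
  have s : ∑ i, ∫⁻ x, F x * ENNReal.ofReal (x i ^ 2) ≤ ENNReal.ofReal (N * (σ ^ 2 * m)) := by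
    calc _ ≤ ∑ i : ι, ENNReal.ofReal (σ ^ 2 * m) := Finset.sum_le_sum fun i _ => h2 i
      _ = _ := by
        rw [Finset.sum_const, Finset.card_univ, ENNReal.ofReal_mul (p := (N:ℝ)) (by positivity),
          nsmul_eq_mul, ENNReal.ofReal_natCast]
  have key2 := key.trans (add_le_add_right (mul_le_mul_right s _) _)
  rw [← ENNReal.ofReal_mul (by positivity), ← ENNReal.ofReal_mul (by positivity),
    ← ENNReal.ofReal_mul (by positivity), ← ENNReal.ofReal_add (by positivity) (by positivity),
    ENNReal.ofReal_le_ofReal_iff (by positivity)] at key2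
  have e : Real.exp (-a) * Real.pi / σ ^ 2 * (N * (σ ^ 2 * m)) = Real.exp (-a) * a * m := by
    rw [ha]; field_simp
  rw [e] at key2
  have e4 : -Real.pi * N = -a := by rw [ha]; ring
  rw [e4]
  linarith

lemma zero_lemma {n : ℕ} (hn : 1 ≤ n) (F : (Fin (n + 1) → ℝ) → ENNReal) (hF : Measurable F)
    (hL : LC F) (h0 : ∫⁻ x, F x = 0) : ∃ i, marg F i 0 = 0 := by
  by_contra hcon
  push Not at hcon
  set j := Fin.last n with hj
  have hj0 : (0 : Fin (n + 1)) ≠ j := by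
    rw [hj]; intro h; have := congrArg Fin.val h; simp at this; omega
  obtain ⟨i', hi'⟩ := Fin.exists_succAbove_eq hj0
  obtain ⟨y0, hy0, hy1⟩ : ∃ y0 : Fin n → ℝ, F (j.insertNth 0 y0) ≠ 0 ∧ y0 i' ≠ 0 := by
    by_contra hc
    push Not at hc
    apply hcon j
    unfold marg
    rw [lintegral_eq_zero_iff (measurable_sect hF j 0), Filter.EventuallyEq, ae_iff]
    have := Measure.pi_hyperplane (fun _ : Fin n => (volume : Measure ℝ)) i' 0
    refine measure_mono_null ?_ this
    intro y hy
    exact hc y hy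
  set p : Fin (n + 1) → ℝ := j.insertNth 0 y0 with hp
  have p0 : p 0 = y0 i' := by
    rw [hp, ← hi', Fin.insertNth_apply_succAbove]
  have pne : p 0 ≠ 0 := by rw [p0]; exact hy1
  -- positivity of the marginals
  have hpos : ∀ s : ℝ, 0 < s → s < 1 → marg F 0 (s * p 0) ≠ 0 := by
    intro s s0 s1 hz
    unfold marg at hz
    rw [lintegral_eq_zero_iff (measurable_sect hF 0 _), Filter.EventuallyEq, ae_iff] at hz
    set K := {y : Fin n → ℝ | F ((0 : Fin (n + 1)).insertNth 0 y) ≠ 0} with hK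
    have hKpos : volume K ≠ 0 := by
      intro hk
      apply hcon 0
      unfold marg
      rw [lintegral_eq_zero_iff (measurable_sect hF 0 0), Filter.EventuallyEq, ae_iff]
      exact hk
    set p' : Fin n → ℝ := fun i => p i.succ with hp'
    have him := Measure.addHaar_image_homothety volume p' (1 - s) K
    have : volume (AffineMap.homothety p' (1 - s) '' K) = 0 := by
      refine measure_mono_null ?_ hz
      rintro z ⟨y, hy, rfl⟩
      have h1 := hL p ((0 : Fin (n + 1)).insertNth 0 y) s s0 s1
      have h2 : F p ^ s * F ((0 : Fin (n + 1)).insertNth 0 y) ^ (1 - s) ≠ 0 := by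
        apply mul_ne_zero
        · rw [ne_eq, ENNReal.rpow_eq_zero_iff]
          rintro (⟨h, _⟩ | ⟨_, h⟩)
          · exact hy0 h
          · linarith
        · rw [ne_eq, ENNReal.rpow_eq_zero_iff]
          rintro (⟨h, _⟩ | ⟨_, h⟩)
          · exact hy h
          · linarith
      have h3 : s • p + (1 - s) • ((0 : Fin (n + 1)).insertNth 0 y : Fin (n + 1) → ℝ) =
          (0 : Fin (n + 1)).insertNth (s * p 0) (AffineMap.homothety p' (1 - s) y) := by
        ext l
        refine Fin.cases ?_ (fun l => ?_) l
        · simp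
        · simp [AffineMap.homothety_apply, hp']; ring
      intro h4
      apply h2
      rw [h3] at h1
      exact le_antisymm (h1.trans (le_of_eq h4)) bot_le
    rw [him] at this
    rcases mul_eq_zero.1 this with h | h
    · simp at h
      have := h.1
      linarith
    · exact hKpos h
  have hz : ∫⁻ t, marg F 0 t = 0 := by rw [lintegral_marg hF, h0]
  rw [lintegral_eq_zero_iff (measurable_marg hF 0), Filter.EventuallyEq, ae_iff] at hz
  have : volume (Set.Ioo (min 0 (p 0)) (max 0 (p 0))) = 0 := by
    refine measure_mono_null ?_ hz
    rintro t ⟨t1, t2⟩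
    have e : t = (t / p 0) * p 0 := by field_simp
    show marg F 0 t ≠ 0
    rw [e]
    rcases lt_or_gt_of_ne pne with h | h
    · rw [min_eq_right h.le] at t1
      rw [max_eq_left h.le] at t2
      apply hpos
      · exact div_pos_of_neg_of_neg t2 h
      · rw [div_lt_one_of_neg h]; exact t1
    · rw [min_eq_left h.le] at t1
      rw [max_eq_right h.le] at t2
      apply hpos
      · exact div_pos t1 h
      · rw [div_lt_one h]; exact t2
  rw [Real.volume_Ioo, ENNReal.ofReal_eq_zero] at this
  rcases lt_or_gt_of_ne pne with h | h
  · rw [min_eq_right h.le, max_eq_left h.le] at this; linarith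
  · rw [min_eq_left h.le, max_eq_right h.le] at this; linarith

lemma upper_step {n : ℕ} (hn : 1 ≤ n) (F : (Fin (n + 1) → ℝ) → ENNReal) (hF : Measurable F)
    (hL : LC F) (m M : ℝ) (hm : 0 ≤ m) (hM : 0 < M) (hb : ∀ x, F x ≤ ENNReal.ofReal M)
    (hI : ∫⁻ x, F x = ENNReal.ofReal m) :
    ∃ i, marg F i 0 ≤ ENNReal.ofReal (51 * Real.exp Real.pi *
      (m ^ ((n : ℝ) / (n + 1)) * M ^ ((1 : ℝ) / (n + 1)))) := by
  rcases hm.eq_or_lt with h | hm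
  · obtain ⟨i, hi⟩ := zero_lemma hn F hF hL (by rw [hI, ← h]; simp)
    exact ⟨i, by rw [hi]; exact bot_le⟩
  by_contra hcon
  push Not at hcon
  set B := 51 * Real.exp Real.pi * (m ^ ((n : ℝ) / (n + 1)) * M ^ ((1 : ℝ) / (n + 1))) with hB
  have B0 : 0 < B := by positivity
  have hBN : B ^ (n + 1) = (51 * Real.exp Real.pi) ^ (n + 1) * (m ^ n * M) := by
    rw [hB, mul_pow]
    congr 1
    rw [mul_pow, ← Real.rpow_natCast, ← Real.rpow_natCast, ← Real.rpow_mul hm.le,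
      ← Real.rpow_mul hM.le]
    have e1 : (n : ℝ) / (n + 1) * ((n + 1 : ℕ) : ℝ) = n := by push_cast; field_simp
    have e2 : (1 : ℝ) / (n + 1) * ((n + 1 : ℕ) : ℝ) = 1 := by push_cast; field_simp
    rw [e1, e2]; simp
  have mom : ∀ i, ∫⁻ x, F x * ENNReal.ofReal (x i ^ 2) ≤ ENNReal.ofReal ((50 * m / B) ^ 2 * m) := by
    intro i
    rw [lintegral_marg_mul hF i (fun t => ENNReal.ofReal (t ^ 2)) (by fun_prop)]
    have hI' : ∫⁻ t, marg F i t = ENNReal.ofReal m := by rw [lintegral_marg hF, hI]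
    obtain ⟨b, bt, hbb⟩ := (hL.marg hF i).bdd volume (measurable_marg hF i) (by
      rw [hI']; simpa using hm) (by rw [hI']; simp)
    have ft : marg F i 0 ≠ ⊤ := ne_top_of_le_ne_top bt (hbb 0)
    have hA : B < (marg F i 0).toReal := (ENNReal.ofReal_lt_iff_lt_toReal B0.le ft).1 (hcon i)
    have A0 := B0.trans hA
    refine ((hL.marg hF i).second_moment (measurable_marg hF i) m _ hm A0 hI'.le
      (ENNReal.ofReal_toReal ft).symm).trans ?_
    apply ENNReal.ofReal_le_ofReal
    calc 2500 * m ^ 3 / (marg F i 0).toReal ^ 2 ≤ 2500 * m ^ 3 / B ^ 2 := by gcongr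
      _ = _ := by ring
  have key := jensen_bound F hF m M (50 * m / B) hm hM (by positivity) hb hI mom
  rw [Fintype.card_fin, div_pow, hBN] at key
  have e1 : M * ((50 * m) ^ (n + 1) / ((51 * Real.exp Real.pi) ^ (n + 1) * (m ^ n * M))) =
      m * ((50 / 51) ^ (n + 1) * (Real.exp (-Real.pi)) ^ (n + 1)) := by
    rw [Real.exp_neg, mul_pow, mul_pow, div_pow, inv_pow, pow_succ m n]
    field_simp
  rw [e1] at key
  have e2 : Real.exp (-Real.pi * ((n + 1 : ℕ) : ℝ)) = Real.exp (-Real.pi) ^ (n + 1) := by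
    rw [← Real.exp_nat_mul]; congr 1; ring
  rw [e2] at key
  have h3 := le_of_mul_le_mul_left key hm
  have h4 : ((50 : ℝ) / 51) ^ (n + 1) < 1 := pow_lt_one₀ (by norm_num) (by norm_num) (by omega)
  have h5 : 0 < Real.exp (-Real.pi) ^ (n + 1) := by positivity
  nlinarith

lemma extend_succAbove {k n : ℕ} (i : Fin (n + 1)) (φ : Fin k → Fin n) (hφ : Function.Injective φ)
    (y : Fin k → ℝ) : Function.extend (fun l => i.succAbove (φ l)) y (0 : Fin (n + 1) → ℝ) =
      i.insertNth 0 (Function.extend φ y 0) := by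
  have hinj : Function.Injective (fun l => i.succAbove (φ l)) :=
    Fin.succAbove_right_injective.comp hφ
  ext j
  refine Fin.succAboveCases i ?_ (fun j => ?_) j
  · rw [Fin.insertNth_apply_same, Function.extend_apply']
    · rfl
    · rintro ⟨l, hl⟩
      exact Fin.succAbove_ne i (φ l) hl
  · rw [Fin.insertNth_apply_succAbove]
    by_cases h : ∃ l, φ l = j
    · obtain ⟨l, rfl⟩ := h
      rw [hφ.extend_apply]
      exact hinj.extend_apply y 0 l
    · rw [Function.extend_apply' _ _ _ h, Function.extend_apply']
      · rfl
      · rintro ⟨l, hl⟩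
        exact h ⟨l, Fin.succAbove_right_injective hl⟩

lemma upper (k : ℕ) (hk : 1 ≤ k) (M : ℝ) (hM : 0 < M) (d : ℕ) :
    ∀ (F : (Fin (k + d) → ℝ) → ENNReal), Measurable F → LC F → ∀ m : ℝ, 0 ≤ m →
    (∀ x, F x ≤ ENNReal.ofReal M) → ∫⁻ x, F x = ENNReal.ofReal m →
    ∃ φ : Fin k → Fin (k + d), Function.Injective φ ∧
      ∫⁻ y : Fin k → ℝ, F (Function.extend φ y 0) ≤ ENNReal.ofReal ((51 * Real.exp Real.pi) ^ d *
        (m ^ ((k : ℝ) / ((k : ℝ) + d)) * M ^ ((d : ℝ) / ((k : ℝ) + d)))) := by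
  induction d with
  | zero =>
    intro F hF hL m hm hb hI
    refine ⟨id, Function.injective_id, ?_⟩
    have : ∀ y : Fin k → ℝ, Function.extend id y 0 = y := fun y => by
      ext j; exact Function.injective_id.extend_apply y 0 j
    have k0 : (k : ℝ) ≠ 0 := by positivity
    have e : ∫⁻ y : Fin k → ℝ, F (Function.extend id y 0) = ENNReal.ofReal m := by
      rw [← hI]
      exact lintegral_congr fun y => congrArg F (this y)
    refine e.le.trans (le_of_eq ?_)
    simp [k0]
  | succ d ih =>
    intro F hF hL m hm hb hI
    obtain ⟨i, hi⟩ := upper_step (n := k + d) (by omega) F hF hL m M hm hM hb hI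
    set C := 51 * Real.exp Real.pi with hC
    have C1 : 1 ≤ C := by
      have := Real.add_one_le_exp Real.pi
      have := Real.pi_pos
      rw [hC]; linarith
    set a := (marg F i 0).toReal with ha
    have ft : marg F i 0 ≠ ⊤ := ne_top_of_le_ne_top ENNReal.ofReal_ne_top hi
    have a0 : 0 ≤ a := ENNReal.toReal_nonneg
    have hale : a ≤ C * (m ^ (((k + d : ℕ) : ℝ) / (((k + d : ℕ) : ℝ) + 1)) *
        M ^ ((1 : ℝ) / (((k + d : ℕ) : ℝ) + 1))) :=
      ENNReal.toReal_le_of_le_ofReal (by positivity) hi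
    obtain ⟨φ, hφ, hφ2⟩ := ih (fun y => F (i.insertNth 0 y)) (measurable_sect hF i 0)
      (hL.comp_lin (fun y => (i.insertNth 0 y : Fin (k + d + 1) → ℝ)) (by
        intro x y t
        have := insertNth_comb i t (1 - t) 0 0 x y
        simpa using this)) a a0 (fun y => hb _) (ENNReal.ofReal_toReal ft).symm
    refine ⟨fun l => i.succAbove (φ l), Fin.succAbove_right_injective.comp hφ, ?_⟩
    have e : ∫⁻ y : Fin k → ℝ, F (Function.extend (fun l => i.succAbove (φ l)) y 0) =
        ∫⁻ y : Fin k → ℝ, F (i.insertNth 0 (Function.extend φ y 0)) :=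
      lintegral_congr fun y => congrArg F (extend_succAbove i φ hφ y)
    refine e.le.trans (hφ2.trans (ENNReal.ofReal_le_ofReal ?_))
    have k0 : (0:ℝ) < k := by positivity
    have d0 : (0:ℝ) ≤ d := by positivity
    push_cast at hale ⊢
    set N : ℝ := (k : ℝ) + d with hN
    have N0 : 0 < N := by positivity
    calc C ^ d * (a ^ ((k:ℝ) / N) * M ^ ((d:ℝ) / N))
        ≤ C ^ d * ((C * (m ^ (N / (N + 1)) * M ^ ((1:ℝ) / (N + 1)))) ^ ((k:ℝ) / N) * M ^ ((d:ℝ) / N)) := by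
          gcongr
      _ = C ^ d * (C ^ ((k:ℝ) / N) * (m ^ ((k:ℝ) / (N + 1)) * M ^ (((d:ℝ) + 1) / (N + 1)))) := by
          rw [Real.mul_rpow (x := C) (by positivity) (by positivity),
            Real.mul_rpow (x := m ^ (N / (N + 1))) (by positivity) (by positivity), ← Real.rpow_mul hm, ← Real.rpow_mul hM.le]
          have e1 : N / (N + 1) * (k / N) = k / (N + 1) := by field_simp
          have e2 : ((d:ℝ) + 1) / (N + 1) = 1 / (N + 1) * (k / N) + d / N := by
            field_simp; rw [hN]; ring
          rw [e1, e2, Real.rpow_add hM]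
          ring
      _ ≤ C ^ d * (C * (m ^ ((k:ℝ) / (N + 1)) * M ^ (((d:ℝ) + 1) / (N + 1)))) := by
          gcongr
          calc C ^ ((k:ℝ) / N) ≤ C ^ (1:ℝ) := by
                apply Real.rpow_le_rpow_of_exponent_le C1
                rw [div_le_one N0]; linarith
            _ = C := Real.rpow_one C
      _ = _ := by rw [← add_assoc, ← hN]; ring

lemma lower {κ : Type*} [Fintype κ] (G : (κ → ℝ) → ℝ) (hpos : ∀ z, 0 ≤ G z)
    (hLC : ∀ x y : κ → ℝ, ∀ t : ℝ, 0 < t → t < 1 → G x ^ t * G y ^ (1 - t) ≤ G (t • x + (1 - t) • y))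
    (hG : Integrable G) (m : ℝ) (hm : 0 < m) (hI : ∫ z, G z = m)
    (i1 : ∀ i, Integrable fun z => G z * z i) (h1 : ∀ i, ∫ z, G z * z i = 0)
    (i2 : ∀ i, Integrable fun z => G z * z i ^ 2) (h2 : ∀ i, ∫ z, G z * z i ^ 2 ≤ m) :
    m * Real.exp (-Real.pi * Fintype.card κ) ≤ G 0 := by
  classical
  -- linear functionals
  have lin : ∀ ℓ : (κ → ℝ) →L[ℝ] ℝ, Integrable (fun z => G z * ℓ z) ∧ ∫ z, G z * ℓ z = 0 := by
    intro ℓ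
    have e : (fun z => G z * ℓ z) = fun z => ∑ i, ℓ (Pi.single i 1) * (G z * z i) := by
      ext z
      have hz : z = ∑ i, z i • (Pi.single i (1:ℝ) : κ → ℝ) := by
        ext j; simp [Pi.single_apply]
      conv_lhs => rw [hz]
      rw [map_sum, Finset.mul_sum]
      refine Finset.sum_congr rfl fun i _ => ?_
      rw [map_smul, smul_eq_mul, ← hz]; ring
    rw [e]
    refine ⟨integrable_finsetSum _ fun i _ => (i1 i).const_mul _, ?_⟩
    rw [integral_finsetSum _ fun i _ => (i1 i).const_mul _]
    simp [integral_const_mul, h1]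
  set V := {z | 0 < G z} with hV
  have cV : Convex ℝ V := by
    intro x hx y hy a b ha hb hab
    rcases ha.eq_or_lt with h | h
    · have : b = 1 := by linarith
      rw [← h, this]; simpa using hy
    rcases hb.eq_or_lt with h' | h'
    · have : a = 1 := by linarith
      rw [← h', this]; simpa using hx
    have := hLC x y a h (by linarith)
    rw [show 1 - a = b by linarith] at this
    have hx' : 0 < G x := hx
    have hy' : 0 < G y := hy
    exact lt_of_lt_of_le (by positivity) this
  set U := interior V with hU
  have cU : Convex ℝ U := cV.interior
  have oU : IsOpen U := isOpen_interior
  have aeU : ∀ᵐ z, z ∈ V → z ∈ U := by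
    rw [ae_iff]
    refine measure_mono_null ?_ (cV.addHaar_frontier volume)
    intro z hz
    have hz' : ¬ (z ∈ V → z ∈ U) := hz
    push Not at hz'
    exact ⟨subset_closure hz'.1, hz'.2⟩
  have z0 : (0 : κ → ℝ) ∈ U := by
    by_contra hcon
    obtain ⟨ℓ, hℓ⟩ := geometric_hahn_banach_open_point cU oU hcon
    rw [map_zero] at hℓ
    obtain ⟨li, l0⟩ := lin ℓ
    have np : 0 ≤ᵐ[volume] fun z => -(G z * ℓ z) := by
      filter_upwards [aeU] with z hz
      show 0 ≤ -(G z * ℓ z)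
      by_cases h : z ∈ V
      · have := hℓ z (hz h)
        have := hpos z
        nlinarith
      · have : G z = 0 := le_antisymm (not_lt.1 h) (hpos z)
        simp [this]
    have hz := (integral_eq_zero_iff_of_nonneg_ae np li.neg).1 (by
      rw [show (∫ z, -(G z * ℓ z)) = _ from integral_neg _, l0, neg_zero])
    have g0 : G =ᵐ[volume] 0 := by
      filter_upwards [aeU, hz] with z h1 h2
      by_contra h
      have hp : 0 < G z := lt_of_le_of_ne (hpos z) (Ne.symm h)
      have := hℓ z (h1 hp)
      have h3 : -(G z * ℓ z) = 0 := h2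
      nlinarith
    rw [integral_congr_ae g0] at hI
    simp at hI
    linarith
  have gp : ∀ z ∈ U, 0 < G z := fun z hz => (interior_subset hz : z ∈ V)
  have conc : ConcaveOn ℝ U (fun z => Real.log (G z)) := by
    refine ⟨cU, ?_⟩
    intro x hx y hy a b ha hb hab
    rcases ha.eq_or_lt with h | h
    · have : b = 1 := by linarith
      rw [← h, this]; simp
    rcases hb.eq_or_lt with h' | h'
    · have : a = 1 := by linarith
      rw [← h', this]; simp
    have h3 := hLC x y a h (by linarith)
    rw [show 1 - a = b by linarith] at h3
    have hx' := gp x hx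
    have hy' := gp y hy
    have h4 := Real.log_le_log (by positivity) h3
    rw [Real.log_mul (by positivity) (by positivity), Real.log_rpow hx', Real.log_rpow hy'] at h4
    simpa using h4
  have cont := conc.continuousOn oU
  obtain ⟨ℓ, hℓ⟩ : ∃ ℓ : (κ → ℝ) →L[ℝ] ℝ, ∀ z ∈ U, Real.log (G z) ≤ Real.log (G 0) + ℓ z := by
    have oO : IsOpen {p : (κ → ℝ) × ℝ | p.1 ∈ U ∧ p.2 < Real.log (G p.1)} := by
      have h1 : IsOpen (U ×ˢ (Set.univ : Set ℝ)) := oU.prod isOpen_univ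
      have c : ContinuousOn (fun p : (κ → ℝ) × ℝ => Real.log (G p.1) - p.2) (U ×ˢ (Set.univ : Set ℝ)) :=
        (cont.comp continuousOn_fst (fun p hp => hp.1)).sub continuousOn_snd
      have := c.isOpen_inter_preimage h1 (isOpen_Ioi (a := (0:ℝ)))
      convert this using 1
      ext p
      simp
    obtain ⟨f, hf⟩ := geometric_hahn_banach_open_point conc.convex_strict_hypograph oO
      (x := ((0 : κ → ℝ), Real.log (G 0))) (by rintro ⟨_, h⟩; exact lt_irrefl _ h)
    set c := f (0, 1) with hc
    have fe : ∀ z r, f (z, r) = f (z, 0) + r * c := by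
      intro z r
      have : ((z, r) : (κ → ℝ) × ℝ) = (z, 0) + r • (0, 1) := by simp
      rw [this, map_add, map_smul, smul_eq_mul]
    have f0 : f ((0 : κ → ℝ), (0:ℝ)) = 0 := map_zero f
    have c0 : 0 < c := by
      have := hf (0, Real.log (G 0) - 1) ⟨z0, by simp⟩
      rw [fe, fe 0 (Real.log (G 0))] at this
      linarith
    refine ⟨(-c⁻¹) • f.comp (ContinuousLinearMap.inl ℝ (κ → ℝ) ℝ), fun z hz => ?_⟩
    have key : f (z, 0) + Real.log (G z) * c ≤ Real.log (G 0) * c := by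
      apply le_of_forall_pos_lt_add
      intro ε hε
      have := hf (z, Real.log (G z) - ε / c) ⟨hz, by simp; positivity⟩
      rw [fe, fe 0 (Real.log (G 0)), f0, sub_mul, div_mul_cancel₀ _ c0.ne'] at this
      linarith
    show Real.log (G z) ≤ Real.log (G 0) + (-c⁻¹) * f (z, 0)
    have : (Real.log (G 0) + (-c⁻¹) * f (z, 0)) = (Real.log (G 0) * c - f (z, 0)) / c := by
      field_simp; ring
    rw [this, le_div_iff₀ c0]
    linarith
  obtain ⟨li, l0⟩ := lin ℓ
  obtain ⟨gi, ge⟩ := gauss_pi (ι := κ) 1 one_pos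
  have Gm0 := gp 0 z0
  set γ := fun z : κ → ℝ => Real.exp (-Real.pi * (∑ i, z i ^ 2) / 1 ^ 2) with hγ
  have intL : Integrable (fun z => G z * (Real.log m + 1) - Real.pi * (∑ i, G z * z i ^ 2) - m * γ z) :=
    ((hG.mul_const _).sub ((integrable_finsetSum _ fun i _ => i2 i).const_mul _)).sub (gi.const_mul m)
  have intR : Integrable (fun z => G z * Real.log (G 0) + G z * ℓ z) := (hG.mul_const _).add li
  have mono := integral_mono_ae intL intR (by
    filter_upwards [aeU] with z hz
    show G z * (Real.log m + 1) - Real.pi * (∑ i, G z * z i ^ 2) - m * γ z ≤ G z * Real.log (G 0) + G z * ℓ z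
    rw [← Finset.mul_sum]
    have γp : 0 < γ z := Real.exp_pos _
    by_cases h : z ∈ V
    · have hz := hz h
      have gz := gp z hz
      have a1 := mul_le_mul_of_nonneg_left (hℓ z hz) gz.le
      have a2 := Real.log_le_sub_one_of_pos (x := m * γ z / G z) (by positivity)
      rw [Real.log_div (by positivity) gz.ne', Real.log_mul hm.ne' γp.ne', hγ, Real.log_exp] at a2
      have a3 := mul_le_mul_of_nonneg_left a2 gz.le
      have e : G z * (m * (fun z : κ → ℝ => Real.exp (-Real.pi * (∑ i, z i ^ 2) / 1 ^ 2)) z / G z - 1)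
        = m * γ z - G z := by rw [hγ]; field_simp
      rw [e] at a3
      ring_nf at a1 a3 ⊢
      linarith
    · have : G z = 0 := le_antisymm (not_lt.1 h) (hpos z)
      simp [this]
      positivity)
  rw [integral_add (hG.mul_const _) li, l0, integral_mul_const, hI, integral_sub, integral_sub,
    integral_mul_const, hI, integral_const_mul, integral_const_mul, ge,
    integral_finsetSum _ fun i _ => i2 i] at mono
  rotate_left
  · exact hG.mul_const _
  · exact ((integrable_finsetSum _ fun i _ => i2 i).const_mul _)
  · exact ((hG.mul_const _).sub ((integrable_finsetSum _ fun i _ => i2 i).const_mul _))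
  · exact gi.const_mul m
  have s : ∑ i, ∫ z, G z * z i ^ 2 ≤ Fintype.card κ * m := by
    calc _ ≤ ∑ i : κ, m := Finset.sum_le_sum fun i _ => h2 i
      _ = _ := by simp
  have hs := mul_le_mul_of_nonneg_left s Real.pi_pos.le
  rw [one_pow] at mono
  have fin : m * (Real.log m - Real.pi * Fintype.card κ) ≤ m * Real.log (G 0) := by
    ring_nf at mono hs ⊢
    linarith
  have fin2 := Real.exp_le_exp.2 (le_of_mul_le_mul_left fin hm)
  rw [Real.exp_log Gm0, sub_eq_add_neg, Real.exp_add, Real.exp_log hm, ← neg_mul] at fin2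
  exact fin2

lemma fin_moment {n : ℕ} (F : (Fin (n + 1) → ℝ) → ENNReal) (hF : Measurable F) (hL : LC F)
    (h0 : ∫⁻ x, F x ≠ 0) (ht : ∫⁻ x, F x ≠ ⊤) (i : Fin (n + 1)) :
    ∫⁻ x, F x * ENNReal.ofReal (x i ^ 2) ≠ ⊤ := by
  rw [lintegral_marg_mul hF i (fun t => ENNReal.ofReal (t ^ 2)) (by fun_prop)]
  rw [← lintegral_marg hF i] at h0 ht
  have hl := hL.marg hF i
  have hm := measurable_marg hF i
  set h := marg F i with hh
  obtain ⟨B, bt, hB⟩ := hl.bdd volume hm h0 ht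
  obtain ⟨a, ha⟩ : ∃ a, h a ≠ 0 := by
    by_contra hc
    push Not at hc
    apply h0
    simp [hc]
  have hat : h a ≠ ⊤ := ne_top_of_le_ne_top bt (hB a)
  have hl2 : LC (fun t => h (t + a)) := hl.comp_lin (fun t => t + a) (by
    intro x y t; simp only [smul_eq_mul]; ring)
  have sm := hl2.second_moment (hm.comp (measurable_id.add_const a)) (∫⁻ t, h t).toReal (h a).toReal
    (ENNReal.toReal_pos h0 ht) (ENNReal.toReal_pos ha hat) (by
      rw [ENNReal.ofReal_toReal ht, lintegral_add_right_eq_self (fun t => h t) a])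
    (by rw [ENNReal.ofReal_toReal hat, zero_add])
  have e : ∫⁻ t, h (t + a) * ENNReal.ofReal (t ^ 2) = ∫⁻ t, h t * ENNReal.ofReal ((t - a) ^ 2) := by
    rw [← lintegral_add_right_eq_self (fun t => h t * ENNReal.ofReal ((t - a) ^ 2)) a]
    simp
  rw [e] at sm
  have le : ∫⁻ t, h t * ENNReal.ofReal (t ^ 2) ≤
      2 * (∫⁻ t, h t * ENNReal.ofReal ((t - a) ^ 2)) + ENNReal.ofReal (2 * a ^ 2) * ∫⁻ t, h t := by
    rw [← lintegral_const_mul' _ _ (by simp), ← lintegral_const_mul' _ _ ENNReal.ofReal_ne_top,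
      ← lintegral_add_left (by fun_prop)]
    apply lintegral_mono
    intro t
    show h t * ENNReal.ofReal (t ^ 2) ≤ 2 * (h t * ENNReal.ofReal ((t - a) ^ 2)) + ENNReal.ofReal (2 * a ^ 2) * h t
    calc h t * ENNReal.ofReal (t ^ 2) ≤ h t * ENNReal.ofReal (2 * (t - a) ^ 2 + 2 * a ^ 2) := by
          apply mul_le_mul_right
          apply ENNReal.ofReal_le_ofReal
          nlinarith [sq_nonneg (t - 2 * a)]
      _ = _ := by
        rw [ENNReal.ofReal_add (by positivity) (by positivity), ENNReal.ofReal_mul (p := 2) (by norm_num)]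
        simp only [ENNReal.ofReal_ofNat]
        ring
  refine ne_top_of_le_ne_top ?_ le
  apply ENNReal.add_ne_top.2
  exact ⟨ENNReal.mul_ne_top (by simp) (ne_top_of_le_ne_top ENNReal.ofReal_ne_top sm),
    ENNReal.mul_ne_top ENNReal.ofReal_ne_top ht⟩

lemma exists_split {n k : ℕ} (φ : Fin k → Fin n) (hφ : Function.Injective φ) :
    ∃ (Φ : ({j : Fin n // j ∉ Set.range φ} → ℝ) × (Fin k → ℝ) → (Fin n → ℝ)),
      MeasurePreserving Φ volume volume ∧ (∀ z y l, Φ (z, y) (φ l) = y l) ∧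
      (∀ z y (j : {j : Fin n // j ∉ Set.range φ}), Φ (z, y) (j : Fin n) = z j) := by
  classical
  set e : {j : Fin n // j ∉ Set.range φ} ⊕ Fin k ≃ Fin n :=
    (Equiv.sumComm _ _).trans ((Equiv.sumCongr (Equiv.ofInjective φ hφ) (Equiv.refl _)).trans
      (Equiv.Set.sumCompl (Set.range φ))) with he
  have el : ∀ j, e (Sum.inl j) = (j : Fin n) := by intro j; rfl
  have er : ∀ l, e (Sum.inr l) = φ l := by intro l; rfl
  refine ⟨fun p => MeasurableEquiv.piCongrLeft (fun _ : Fin n => ℝ) e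
    ((MeasurableEquiv.sumPiEquivProdPi (fun _ => ℝ)).symm p), ?_, ?_, ?_⟩
  · exact (volume_measurePreserving_piCongrLeft (fun _ : Fin n => ℝ) e).comp
      (volume_measurePreserving_sumPiEquivProdPi_symm (fun _ => ℝ))
  · intro z y l
    rw [← er l]
    exact Equiv.piCongrLeft_sumInr (fun _ : Fin n => ℝ) e z y l
  · intro z y j
    rw [← el j]
    exact Equiv.piCongrLeft_sumInl (fun _ : Fin n => ℝ) e z y j

lemma lower_sect {n k : ℕ} (φ : Fin k → Fin n) (hφ : Function.Injective φ)
    (F : (Fin n → ℝ) → ENNReal) (hF : Measurable F) (hL : LC F) (m : ℝ) (hm : 0 < m)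
    (hI : ∫⁻ x, F x = ENNReal.ofReal m)
    (h1 : ∀ i, ∫⁻ x, F x * ENNReal.ofReal (x i) = ∫⁻ x, F x * ENNReal.ofReal (-(x i)))
    (h2 : ∀ i, ∫⁻ x, F x * ENNReal.ofReal (x i ^ 2) ≤ ENNReal.ofReal m) :
    (∫⁻ y : Fin k → ℝ, F (Function.extend φ y 0)) ≠ ⊤ ∧
    m * Real.exp (-Real.pi * ((n - k : ℕ) : ℝ)) ≤
      (∫⁻ y : Fin k → ℝ, F (Function.extend φ y 0)).toReal := by
  classical
  obtain ⟨Φ, mp, hr, hl⟩ := exists_split φ hφ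
  have ext' : ∀ u v : Fin n → ℝ, (∀ l, u (φ l) = v (φ l)) →
      (∀ j : {j : Fin n // j ∉ Set.range φ}, u j = v j) → u = v := by
    intro u v a b
    ext j
    by_cases h : j ∈ Set.range φ
    · obtain ⟨l, rfl⟩ := h; exact a l
    · exact b ⟨j, h⟩
  have hΦm := mp.measurable
  set g : ({j : Fin n // j ∉ Set.range φ} → ℝ) → ENNReal := fun z => ∫⁻ y, F (Φ (z, y)) with hg
  have gm : Measurable g :=
    Measurable.lintegral_prod_right (f := fun z y => F (Φ (z, y))) (hF.comp hΦm)
  have g0 : g 0 = ∫⁻ y : Fin k → ℝ, F (Function.extend φ y 0) := by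
    refine lintegral_congr fun y => congrArg F (ext' _ _ (fun l => ?_) (fun j => ?_))
    · rw [hr, hφ.extend_apply]
    · rw [hl, Function.extend_apply' _ _ _ j.2]; rfl
  have gL : LC g := by
    intro x y t t0 t1
    refine pl_pi t t0 t1 k _ _ _ (hF.comp (hΦm.comp measurable_prodMk_left))
      (hF.comp (hΦm.comp measurable_prodMk_left)) (hF.comp (hΦm.comp measurable_prodMk_left)) ?_
    intro u v
    have := hL (Φ (x, u)) (Φ (y, v)) t t0 t1
    refine this.trans (le_of_eq (congrArg F (ext' _ _ (fun l => ?_) (fun j => ?_))))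
    · simp [hr]
    · simp [hl]
  have wt : ∀ (w : ({j : Fin n // j ∉ Set.range φ} → ℝ) → ENNReal), Measurable w →
      ∫⁻ z, g z * w z = ∫⁻ x, F x * w (fun j => x j) := by
    intro w hw
    have hm : Measurable fun x : Fin n → ℝ => F x * w (fun j => x j) :=
      hF.mul (hw.comp (by fun_prop))
    rw [← mp.lintegral_comp hm, Measure.volume_eq_prod, 
      lintegral_prod (fun a => F (Φ a) * w (fun j => Φ a j)) (hm.comp hΦm).aemeasurable]
    refine lintegral_congr fun z => ?_
    have hmz : Measurable fun y => F (Φ (z, y)) := hF.comp (hΦm.comp measurable_prodMk_left)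
    refine (lintegral_mul_const (w z) hmz).symm.trans ?_
    refine lintegral_congr fun y => ?_
    congr 2
    ext j
    exact (hl z y j).symm
  have gI : ∫⁻ z, g z = ENNReal.ofReal m := by
    have := wt (fun _ => 1) measurable_const
    simpa [hI] using this
  obtain ⟨B, bt, hB⟩ := gL.bdd volume gm (by rw [gI]; simpa using hm) (by rw [gI]; simp)
  have gt : ∀ z, g z ≠ ⊤ := fun z => ne_top_of_le_ne_top bt (hB z)
  set G := fun z => (g z).toReal with hG
  have Gm : Measurable G := gm.ennreal_toReal
  have Gg : ∀ z, ENNReal.ofReal (G z) = g z := fun z => ENNReal.ofReal_toReal (gt z)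
  have G0 : ∀ z, 0 ≤ G z := fun z => ENNReal.toReal_nonneg
  have Gi : Integrable G := integrable_toReal_of_lintegral_ne_top gm.aemeasurable (by rw [gI]; simp)
  have om : ∀ (w : ({j : Fin n // j ∉ Set.range φ} → ℝ) → ℝ) z,
      ENNReal.ofReal (G z * w z) = g z * ENNReal.ofReal (w z) := by
    intro w z; rw [ENNReal.ofReal_mul (G0 z), Gg]
  have sq : ∀ i, ∫⁻ z, ENNReal.ofReal (G z * z i ^ 2) ≤ ENNReal.ofReal m := by
    intro i
    rw [lintegral_congr (om fun z => z i ^ 2), wt (fun z => ENNReal.ofReal (z i ^ 2)) (by fun_prop)]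
    exact h2 i
  have i2 : ∀ i, Integrable fun z => G z * z i ^ 2 := by
    intro i
    refine ⟨(by fun_prop : Measurable fun z => G z * z i ^ 2).aestronglyMeasurable, ?_⟩
    rw [hasFiniteIntegral_iff_ofReal (Filter.Eventually.of_forall fun z => mul_nonneg (G0 z) (sq_nonneg _))]
    exact (sq i).trans_lt ENNReal.ofReal_lt_top
  have i1 : ∀ i, Integrable fun z => G z * z i := by
    intro i
    refine (Gi.add (i2 i)).mono' (by fun_prop : Measurable fun z => G z * z i).aestronglyMeasurable ?_
    refine Filter.Eventually.of_forall fun z => ?_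
    show ‖G z * z i‖ ≤ G z + G z * z i ^ 2
    rw [norm_mul, Real.norm_of_nonneg (G0 z), Real.norm_eq_abs]
    have : |z i| ≤ 1 + z i ^ 2 := by
      rw [← sq_abs]; nlinarith [sq_nonneg (|z i| - 1), abs_nonneg (z i)]
    have := mul_le_mul_of_nonneg_left this (G0 z)
    linarith
  have key := lower G G0 (by
      intro x y t t0 t1
      have := ENNReal.toReal_mono (gt _) (gL x y t t0 t1)
      rwa [ENNReal.toReal_mul, ← ENNReal.toReal_rpow, ← ENNReal.toReal_rpow] at this) Gi m hm
    (by rw [hG, integral_toReal gm.aemeasurable (Filter.Eventually.of_forall fun z => (gt z).lt_top), gI,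
          ENNReal.toReal_ofReal hm.le])
    i1 (by
      intro i
      rw [integral_eq_lintegral_pos_part_sub_lintegral_neg_part (i1 i)]
      have a := wt (fun z => ENNReal.ofReal (z i)) (by fun_prop)
      have b := wt (fun z => ENNReal.ofReal (-z i)) (by fun_prop)
      simp only [← mul_neg]
      rw [lintegral_congr (om fun z => z i), lintegral_congr (om fun z => -z i), a, b, h1, sub_self])
    i2 (by
      intro i
      rw [integral_eq_lintegral_of_nonneg_ae (Filter.Eventually.of_forall fun z => mul_nonneg (G0 z) (sq_nonneg _))
        (i2 i).1]
      exact ENNReal.toReal_le_of_le_ofReal hm.le (sq i))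
  have card : Fintype.card {j : Fin n // j ∉ Set.range φ} = n - k := by
    rw [Fintype.card_subtype_compl, Fintype.card_fin]
    congr 1
    rw [show Fintype.card {x // x ∈ Set.range φ} = Fintype.card (Set.range φ) from rfl,
      Set.card_range_of_injective hφ, Fintype.card_fin]
  rw [card] at key
  rw [← g0]
  exact ⟨gt 0, key⟩

lemma sect_transfer {n k : ℕ} (A : (Fin k → ℝ) →ₗ[ℝ] Eucl n) (hA : Function.Injective A) :
    ∃ (H : Submodule ℝ (Eucl n)) (c : NNReal), Module.finrank ℝ H = k ∧
      ∀ f : Eucl n → ℝ, ∫ y, f (A y) = c * sectL1 f H := by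
  set H := LinearMap.range A with hH
  let e : (Fin k → ℝ) ≃L[ℝ] H := (LinearEquiv.ofInjective A hA).toContinuousLinearEquiv
  have he : ∀ y, (e y : Eucl n) = A y := fun y => rfl
  have i1 : (Measure.map e (volume : Measure (Fin k → ℝ))).IsAddHaarMeasure :=
    e.isAddHaarMeasure_map volume
  refine ⟨H, Measure.addHaarScalarFactor (Measure.map e volume) volume, ?_, fun f => ?_⟩
  · rw [hH, LinearMap.finrank_range_of_inj hA]; simp
  · have h1 := Measure.isAddLeftInvariant_eq_smul (Measure.map e (volume : Measure (Fin k → ℝ)))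
      (volume : Measure H)
    have h2 := integral_map_equiv (μ := (volume : Measure (Fin k → ℝ)))
      e.toHomeomorph.toMeasurableEquiv (fun y : H => f y)
    have h3 : ∫ y, f (A y) = ∫ y : H, f y ∂(Measure.map e (volume : Measure (Fin k → ℝ))) := h2.symm
    rw [h3]
    have h4 := congrArg (fun μ : Measure H => ∫ y : H, f y ∂μ) h1
    refine h4.trans ?_
    show ∫ y : H, f y ∂(_ • (volume : Measure H)) = _
    rw [integral_smul_nnreal_measure]
    rfl

lemma lintegral_mulVec {n : ℕ} (T : Matrix (Fin n) (Fin n) ℝ) (hT : T.det ≠ 0)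
    (F : (Fin n → ℝ) → ENNReal) (hF : Measurable F) :
    ∫⁻ x, F (T.mulVec x) = ENNReal.ofReal |T.det|⁻¹ * ∫⁻ x, F x := by
  have h := Real.map_matrix_volume_pi_eq_smul_volume_pi hT
  have hm : Measurable (Matrix.toLin' T) := (LinearMap.continuous_of_finiteDimensional _).measurable
  have h2 := lintegral_map (μ := volume) hF hm
  rw [h, lintegral_smul_measure, abs_inv] at h2
  exact h2.symm

lemma measurable_mulVec {n : ℕ} (T : Matrix (Fin n) (Fin n) ℝ) : Measurable (fun x => T.mulVec x) :=
  (LinearMap.continuous_of_finiteDimensional (Matrix.toLin' T)).measurable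

lemma integrable_mulVec {n : ℕ} (T : Matrix (Fin n) (Fin n) ℝ) (hT : T.det ≠ 0)
    (f : (Fin n → ℝ) → ℝ) (hf : Measurable f) (hi : Integrable f) :
    Integrable (fun x => f (T.mulVec x)) := by
  refine ⟨(hf.comp (measurable_mulVec T)).aestronglyMeasurable, ?_⟩
  show ∫⁻ x, ‖f (T.mulVec x)‖ₑ < ⊤
  rw [lintegral_mulVec T hT (fun x => ‖f x‖ₑ) hf.enorm]
  exact ENNReal.mul_lt_top ENNReal.ofReal_lt_top hi.2

lemma integral_mulVec {n : ℕ} (T : Matrix (Fin n) (Fin n) ℝ) (hT : T.det ≠ 0)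
    (f : (Fin n → ℝ) → ℝ) (hf : Measurable f) :
    ∫ x, f (T.mulVec x) = |T.det|⁻¹ * ∫ x, f x := by
  have h := Real.map_matrix_volume_pi_eq_smul_volume_pi hT
  have hm : Measurable (Matrix.toLin' T) := (LinearMap.continuous_of_finiteDimensional _).measurable
  have h2 := integral_map (μ := volume) hm.aemeasurable (f := f) hf.aestronglyMeasurable
  rw [h, integral_smul_measure, ENNReal.toReal_ofReal (by positivity), abs_inv] at h2
  exact h2.symm

lemma moments {n : ℕ} (f : (Fin (n + 1) → ℝ) → ℝ) (h0 : ∀ x, 0 ≤ f x) (hf : Measurable f)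
    (hL : LC (fun x => ENNReal.ofReal (f x))) (hi : Integrable f) (hp : 0 < ∫ x, f x) :
    (∀ i, Integrable fun x => f x * x i) ∧ (∀ i j, Integrable fun x => f x * x i * x j) := by
  have e := ofReal_integral_eq_lintegral_ofReal hi (Filter.Eventually.of_forall h0)
  have sq : ∀ i, Integrable fun x => f x * x i ^ 2 := by
    intro i
    refine ⟨(by fun_prop : Measurable fun x => f x * x i ^ 2).aestronglyMeasurable, ?_⟩
    rw [hasFiniteIntegral_iff_ofReal (Filter.Eventually.of_forall fun z => mul_nonneg (h0 z) (sq_nonneg _))]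
    have := fin_moment _ hf.ennreal_ofReal hL (by rw [← e]; simpa using hp) (by rw [← e]; simp) i
    rw [lt_top_iff_ne_top]
    simp only [ENNReal.ofReal_mul (h0 _)]
    exact this
  constructor
  · intro i
    refine (hi.add (sq i)).mono' (by fun_prop : Measurable fun z => f z * z i).aestronglyMeasurable ?_
    refine Filter.Eventually.of_forall fun z => ?_
    show ‖f z * z i‖ ≤ f z + f z * z i ^ 2
    rw [norm_mul, Real.norm_of_nonneg (h0 z), Real.norm_eq_abs]
    have : |z i| ≤ 1 + z i ^ 2 := by
      rw [← sq_abs]; nlinarith [sq_nonneg (|z i| - 1), abs_nonneg (z i)]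
    have := mul_le_mul_of_nonneg_left this (h0 z)
    linarith
  · intro i j
    refine ((sq i).add (sq j)).mono' (by fun_prop : Measurable fun z => f z * z i * z j).aestronglyMeasurable ?_
    refine Filter.Eventually.of_forall fun z => ?_
    show ‖f z * z i * z j‖ ≤ f z * z i ^ 2 + f z * z j ^ 2
    rw [mul_assoc, norm_mul, Real.norm_of_nonneg (h0 z), Real.norm_eq_abs]
    have : |z i * z j| ≤ z i ^ 2 + z j ^ 2 := by
      rw [abs_le]; constructor <;> nlinarith [sq_nonneg (z i - z j), sq_nonneg (z i + z j)]
    have := mul_le_mul_of_nonneg_left this (h0 z)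
    linarith

open Matrix in
lemma normalize_cov {n : ℕ} (f : (Fin (n + 1) → ℝ) → ℝ) (h0 : ∀ x, 0 ≤ f x) (hf : Measurable f)
    (hL : LC (fun x => ENNReal.ofReal (f x))) (hi : Integrable f) (hp : 0 < ∫ x, f x)
    (hc : ∀ i, ∫ x, f x * x i = 0) (S : Matrix (Fin (n + 1)) (Fin (n + 1)) ℝ)
    (hS : ∀ i j, S i j = (∫ x, f x * x i * x j) / ∫ x, f x) :
    0 < S.det ∧ ∃ T : Matrix (Fin (n + 1)) (Fin (n + 1)) ℝ, |T.det| = Real.sqrt S.det ∧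
      (∀ i, ∫⁻ x, ENNReal.ofReal (f (T.mulVec x)) * ENNReal.ofReal (x i) =
        ∫⁻ x, ENNReal.ofReal (f (T.mulVec x)) * ENNReal.ofReal (-(x i))) ∧
      (∀ i, ∫⁻ x, ENNReal.ofReal (f (T.mulVec x)) * ENNReal.ofReal (x i ^ 2) ≤
        ENNReal.ofReal (|T.det|⁻¹ * ∫ x, f x)) := by
  obtain ⟨i1, i2⟩ := moments f h0 hf hL hi hp
  set I := ∫ x, f x with hI
  -- quadratic forms
  have quad : ∀ v : Fin (n + 1) → ℝ, Integrable (fun x => f x * (v ⬝ᵥ x) ^ 2) ∧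
      ∫ x, f x * (v ⬝ᵥ x) ^ 2 = I * (v ⬝ᵥ (S *ᵥ v)) := by
    intro v
    have e : (fun x => f x * (v ⬝ᵥ x) ^ 2) =
        fun x => ∑ i, ∑ j, v i * v j * (f x * x i * x j) := by
      ext x
      rw [sq]
      simp only [dotProduct]
      rw [Finset.sum_mul_sum, Finset.mul_sum]
      refine Finset.sum_congr rfl fun i _ => ?_
      rw [Finset.mul_sum]
      refine Finset.sum_congr rfl fun j _ => ?_
      ring
    rw [e]
    refine ⟨integrable_finsetSum _ fun i _ => integrable_finsetSum _ fun j _ => (i2 i j).const_mul _, ?_⟩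
    rw [integral_finsetSum _ fun i _ => integrable_finsetSum _ fun j _ => (i2 i j).const_mul _]
    simp only [dotProduct, mulVec]
    rw [Finset.mul_sum]
    refine Finset.sum_congr rfl fun i _ => ?_
    rw [integral_finsetSum _ fun j _ => (i2 i j).const_mul _, Finset.mul_sum, Finset.mul_sum]
    refine Finset.sum_congr rfl fun j _ => ?_
    rw [integral_const_mul, hS]
    field_simp
  have lin : ∀ v : Fin (n + 1) → ℝ, Integrable (fun x => f x * (v ⬝ᵥ x)) ∧
      ∫ x, f x * (v ⬝ᵥ x) = 0 := by
    intro v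
    have e : (fun x => f x * (v ⬝ᵥ x)) = fun x => ∑ i, v i * (f x * x i) := by
      ext x
      simp only [dotProduct]
      rw [Finset.mul_sum]
      refine Finset.sum_congr rfl fun i _ => ?_
      ring
    rw [e]
    refine ⟨integrable_finsetSum _ fun i _ => (i1 i).const_mul _, ?_⟩
    rw [integral_finsetSum _ fun i _ => (i1 i).const_mul _]
    simp [integral_const_mul, hc]
  have pd : S.PosDef := by
    refine PosDef.of_dotProduct_mulVec_pos ?_ ?_
    · ext i j
      simp only [conjTranspose_apply, star_trivial, hS]
      congr 2
      ext x; ring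
    · intro v hv
      rw [star_trivial]
      obtain ⟨qi, qe⟩ := quad v
      have nn : 0 ≤ fun x => f x * (v ⬝ᵥ x) ^ 2 := fun x => mul_nonneg (h0 x) (sq_nonneg _)
      have qn : 0 ≤ ∫ x, f x * (v ⬝ᵥ x) ^ 2 := integral_nonneg nn
      have : 0 < ∫ x, f x * (v ⬝ᵥ x) ^ 2 := by
        refine lt_of_le_of_ne qn fun hz => ?_
        have h := (integral_eq_zero_iff_of_nonneg nn qi).1 hz.symm
        let ℓ : (Fin (n + 1) → ℝ) →ₗ[ℝ] ℝ := dotProductBilin ℝ ℝ v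
        have hne : LinearMap.ker ℓ ≠ ⊤ := by
          intro ht
          have : v ∈ LinearMap.ker ℓ := by rw [ht]; trivial
          have : v ⬝ᵥ v = 0 := this
          exact hv (dotProduct_self_eq_zero.1 this)
        have hnull := Measure.addHaar_submodule volume (LinearMap.ker ℓ) hne
        have : f =ᵐ[volume] 0 := by
          have hae : ∀ᵐ x, x ∉ (LinearMap.ker ℓ : Set (Fin (n + 1) → ℝ)) := measure_eq_zero_iff_ae_notMem.1 hnull
          filter_upwards [h, hae] with x hx hx2
          have hx' : f x * (v ⬝ᵥ x) ^ 2 = 0 := hx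
          rcases mul_eq_zero.1 hx' with h | h
          · exact h
          · exact absurd (pow_eq_zero_iff (two_ne_zero)|>.1 h) hx2
        rw [hI, integral_congr_ae this] at hp
        simp at hp
      rw [qe] at this
      exact pos_of_mul_pos_right this hp.le
  obtain ⟨B, hB⟩ : ∃ B : Matrix (Fin (n + 1)) (Fin (n + 1)) ℝ, S = Bᵀ * B := by
    open MatrixOrder in
    obtain ⟨B, hB⟩ := CStarAlgebra.nonneg_iff_eq_star_mul_self.mp pd.posSemidef.nonneg
    exact ⟨B, by rw [hB, star_eq_conjTranspose, conjTranspose_eq_transpose_of_trivial]⟩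
  have dS : 0 < S.det := pd.det_pos
  have dB : S.det = B.det ^ 2 := by rw [hB, det_mul, det_transpose, sq]
  have dB0 : B.det ≠ 0 := by
    intro h; rw [dB, h] at dS; simp at dS
  have dT : (Bᵀ).det ≠ 0 := by rwa [det_transpose]
  refine ⟨dS, Bᵀ, ?_, ?_, ?_⟩
  · rw [dB, Real.sqrt_sq_eq_abs, det_transpose]
  all_goals
    intro i
    set v : Fin (n + 1) → ℝ := (Bᵀ)⁻¹ i with hv
    have hvx : ∀ x, v ⬝ᵥ (Bᵀ *ᵥ x) = x i := by
      intro x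
      have : ((Bᵀ)⁻¹ *ᵥ (Bᵀ *ᵥ x)) i = x i := by
        rw [mulVec_mulVec, nonsing_inv_mul _ (isUnit_iff_ne_zero.2 dT), one_mulVec]
      exact this
  · obtain ⟨li, le⟩ := lin v
    have lm : Measurable fun x => f x * (v ⬝ᵥ x) := by unfold dotProduct; fun_prop
    have j1 := integrable_mulVec Bᵀ dT _ lm li
    have j2 := integral_mulVec Bᵀ dT _ lm
    rw [le, mul_zero] at j2
    simp only [hvx] at j1 j2
    rw [integral_eq_lintegral_pos_part_sub_lintegral_neg_part j1, sub_eq_zero,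
      ENNReal.toReal_eq_toReal_iff' ] at j2
    · simp only [← mul_neg] at j2
      simpa only [ENNReal.ofReal_mul (h0 _)] using j2
    · exact ((lintegral_ofReal_le_lintegral_enorm _).trans_lt j1.2).ne
    · exact ((lintegral_ofReal_le_lintegral_enorm _).trans_lt j1.neg.2).ne
  · obtain ⟨li, le⟩ := quad v
    have lm : Measurable fun x => f x * (v ⬝ᵥ x) ^ 2 := by unfold dotProduct; fun_prop
    have j1 := integrable_mulVec Bᵀ dT _ lm li
    have j2 := integral_mulVec Bᵀ dT _ lm
    have one : v ⬝ᵥ (S *ᵥ v) = 1 := by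
      rw [hB, ← mulVec_mulVec, hvx]
      have h : (B * B⁻¹) i i = 1 := by
        rw [mul_nonsing_inv _ (isUnit_iff_ne_zero.2 dB0), one_apply_eq]
      rw [mul_apply] at h
      rw [← h]
      simp only [mulVec, dotProduct, hv, ← transpose_nonsing_inv, transpose_apply]
    rw [le, one, mul_one] at j2
    simp only [hvx] at j1 j2
    rw [← j2, ofReal_integral_eq_lintegral_ofReal j1 (Filter.Eventually.of_forall fun x =>
      mul_nonneg (h0 _) (sq_nonneg _))]
    simp only [ENNReal.ofReal_mul (h0 _)]
    exact le_rfl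

lemma final_arith_s17 (k d : ℕ) (hk : 1 ≤ k) (I₁ I₂ M₁ M₂ D s E C₀ : ℝ) (hI₁ : 0 < I₁) (hI₂ : 0 < I₂)
    (hM₁ : 0 ≤ M₁) (hM₂ : 0 < M₂) (hD : 0 < D) (hs : s = D ^ 2) (hE : 0 < E) (hC : 0 < C₀)
    (key : D⁻¹ * I₁ * (E⁻¹) ^ d ≤ C₀ ^ d * ((D⁻¹ * I₂) ^ ((k : ℝ) / ((k : ℝ) + d)) *
      M₂ ^ ((d : ℝ) / ((k : ℝ) + d)))) :
    I₁ ^ ((k : ℝ) / ((k + d : ℕ) : ℝ)) * M₁ ^ ((((k + d : ℕ) : ℝ) - k) / ((k + d : ℕ) : ℝ)) ≤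
      (C₀ * E * ((M₁ / I₁) ^ ((1 : ℝ) / ((k + d : ℕ) : ℝ)) *
        s ^ (1 / (2 * ((k + d : ℕ) : ℝ))))) ^ (k + d - k) *
      (I₂ ^ ((k : ℝ) / ((k + d : ℕ) : ℝ)) * M₂ ^ ((((k + d : ℕ) : ℝ) - k) / ((k + d : ℕ) : ℝ))) := by
  have k0 : (0 : ℝ) < k := by positivity
  have d0 : (0 : ℝ) ≤ d := by positivity
  push_cast
  rw [show k + d - k = d by omega, show (k : ℝ) + d - k = d by ring]
  set N : ℝ := (k : ℝ) + d with hN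
  have N0 : 0 < N := by positivity
  have es : s ^ (1 / (2 * N)) = D ^ (1 / N) := by
    rw [hs, ← Real.rpow_natCast, ← Real.rpow_mul hD.le]
    congr 1; push_cast; field_simp
  have pw : ∀ x : ℝ, 0 ≤ x → (x ^ (1 / N)) ^ d = x ^ (d / N) := by
    intro x hx
    rw [← Real.rpow_natCast, ← Real.rpow_mul hx]
    congr 1; field_simp
  rw [es, mul_pow, mul_pow, mul_pow, pw _ (by positivity), pw _ hD.le, Real.div_rpow hM₁ hI₁.le]
  rw [Real.mul_rpow (by positivity) hI₂.le, Real.inv_rpow hD.le] at key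
  have eD : D = D ^ ((k:ℝ) / N) * D ^ ((d:ℝ) / N) := by
    rw [← Real.rpow_add hD, ← add_div, ← hN, div_self N0.ne', Real.rpow_one]
  have eI : I₁ = I₁ ^ ((k:ℝ) / N) * I₁ ^ ((d:ℝ) / N) := by
    rw [← Real.rpow_add hI₁, ← add_div, ← hN, div_self N0.ne', Real.rpow_one]
  set a := D ^ ((k:ℝ) / N) with ha
  set b := D ^ ((d:ℝ) / N) with hb
  set p := I₁ ^ ((k:ℝ) / N) with hp
  set q := I₁ ^ ((d:ℝ) / N) with hq
  set u := I₂ ^ ((k:ℝ) / N) with hu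
  set v := M₂ ^ ((d:ℝ) / N) with hv
  set w := M₁ ^ ((d:ℝ) / N) with hw
  have a0 : 0 < a := by positivity
  have b0 : 0 < b := by positivity
  have p0 : 0 < p := by positivity
  have q0 : 0 < q := by positivity
  have w0 : 0 ≤ w := by positivity
  clear_value a b p q u v w
  rw [eD, eI, inv_pow] at key
  have k2 : p * q ≤ C₀ ^ d * E ^ d * b * u * v := by
    have h := mul_le_mul_of_nonneg_left key (a := a * b * E ^ d) (by positivity)
    have e1 : a * b * E ^ d * ((a * b)⁻¹ * (p * q) * (E ^ d)⁻¹) = p * q := by field_simp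
    have e2 : a * b * E ^ d * (C₀ ^ d * (a⁻¹ * u * v)) = C₀ ^ d * E ^ d * b * u * v := by field_simp
    rwa [e1, e2] at h
  calc p * w = (p * q) * (w / q) := by field_simp
    _ ≤ (C₀ ^ d * E ^ d * b * u * v) * (w / q) := mul_le_mul_of_nonneg_right k2 (by positivity)
    _ = _ := by ring

lemma int_toLp {n : ℕ} (g : Eucl n → ℝ) : ∫ x, g x = ∫ x : Fin n → ℝ, g (WithLp.toLp 2 x) :=
  ((EuclideanSpace.volume_preserving_symm_measurableEquiv_toLp (Fin n)).symm.integral_comp'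
    (f := MeasurableEquiv.toLp 2 (Fin n → ℝ)) g).symm

lemma memQ0_pi {n : ℕ} {f : Eucl n → ℝ} (h : MemQ0 f) :
    Measurable (fun x : Fin n → ℝ => f (WithLp.toLp 2 x)) ∧
    LC (fun x : Fin n → ℝ => ENNReal.ofReal (f (WithLp.toLp 2 x))) ∧
    Integrable (fun x : Fin n → ℝ => f (WithLp.toLp 2 x)) ∧
    0 < ∫ x : Fin n → ℝ, f (WithLp.toLp 2 x) := by
  obtain ⟨h0, hlc, husc, hi, hp⟩ := h
  refine ⟨?_, ?_, ?_, ?_⟩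
  · exact husc.measurable.comp (MeasurableEquiv.toLp 2 (Fin n → ℝ)).measurable
  · intro x y t t0 t1
    have := hlc (WithLp.toLp 2 x) (WithLp.toLp 2 y) t t0 t1
    rw [ENNReal.ofReal_rpow_of_nonneg (h0 _) t0.le, ENNReal.ofReal_rpow_of_nonneg (h0 _) (by linarith),
      ← ENNReal.ofReal_mul (Real.rpow_nonneg (h0 _) _)]
    exact ENNReal.ofReal_le_ofReal this
  · exact ((EuclideanSpace.volume_preserving_symm_measurableEquiv_toLp (Fin n)).symm.integrable_comp_emb
      (MeasurableEquiv.toLp 2 (Fin n → ℝ)).measurableEmbedding).2 hi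
  · rwa [← int_toLp]

lemma normalize_cov' {n : ℕ} (hn : 1 ≤ n) (f : (Fin n → ℝ) → ℝ) (h0 : ∀ x, 0 ≤ f x) (hf : Measurable f)
    (hL : LC (fun x => ENNReal.ofReal (f x))) (hi : Integrable f) (hp : 0 < ∫ x, f x)
    (hc : ∀ i, ∫ x, f x * x i = 0) (S : Matrix (Fin n) (Fin n) ℝ)
    (hS : ∀ i j, S i j = (∫ x, f x * x i * x j) / ∫ x, f x) :
    0 < S.det ∧ ∃ T : Matrix (Fin n) (Fin n) ℝ, |T.det| = Real.sqrt S.det ∧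
      (∀ i, ∫⁻ x, ENNReal.ofReal (f (T.mulVec x)) * ENNReal.ofReal (x i) =
        ∫⁻ x, ENNReal.ofReal (f (T.mulVec x)) * ENNReal.ofReal (-(x i))) ∧
      (∀ i, ∫⁻ x, ENNReal.ofReal (f (T.mulVec x)) * ENNReal.ofReal (x i ^ 2) ≤
        ENNReal.ofReal (|T.det|⁻¹ * ∫ x, f x)) := by
  cases n with
  | zero => omega
  | succ n => exact normalize_cov f h0 hf hL hi hp hc S hS

lemma core (k d : ℕ) (hk : 1 ≤ k) (f₁ f₂ : Eucl (k + d) → ℝ) (q₁ : MemQ0 f₁) (q₂ : MemQ0 f₂)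
    (hBP : ∀ H : Submodule ℝ (Eucl (k + d)), Module.finrank ℝ H = k → sectL1 f₁ H ≤ sectL1 f₂ H)
    (hc : ∀ i : Fin (k + d), (∫ x, f₁ x * x i) = 0) :
    (∫ x, f₁ x) ^ ((k : ℝ) / ((k + d : ℕ) : ℝ)) *
        supNorm f₁ ^ ((((k + d : ℕ) : ℝ) - k) / ((k + d : ℕ) : ℝ)) ≤
      ((51 * Real.exp Real.pi) * Real.exp Real.pi * isoConst f₁) ^ (k + d - k) *
      ((∫ x, f₂ x) ^ ((k : ℝ) / ((k + d : ℕ) : ℝ)) *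
        supNorm f₂ ^ ((((k + d : ℕ) : ℝ) - k) / ((k + d : ℕ) : ℝ))) := by
  have p₁ := q₁.1
  have p₂ := q₂.1
  have I₁0 := q₁.2.2.2.2
  have I₂0 := q₂.2.2.2.2
  obtain ⟨m₁, l₁, i₁, I₁⟩ := memQ0_pi q₁
  obtain ⟨m₂, l₂, i₂, I₂⟩ := memQ0_pi q₂
  -- the covariance matrix and its square root
  obtain ⟨dS, T, hT, hT1, hT2⟩ := normalize_cov' (by omega) _ (fun x => p₁ _) m₁ l₁ i₁ I₁
    (fun i => by rw [← int_toLp (fun x => f₁ x * x i)]; exact hc i) (covMatrix f₁) (by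
      intro i j
      simp only [covMatrix, Matrix.of_apply]
      rw [hc i, hc j, int_toLp (fun x => f₁ x * x i * x j), int_toLp f₁]
      simp)
  rw [← int_toLp f₁] at hT2
  set D := |T.det| with hD
  have D0 : 0 < D := by rw [hT]; exact Real.sqrt_pos.2 dS
  have Tdet : T.det ≠ 0 := abs_pos.1 D0
  have Tc : ∀ x y : Fin (k + d) → ℝ, ∀ t : ℝ, T.mulVec (t • x + (1 - t) • y) =
      t • T.mulVec x + (1 - t) • T.mulVec y := by
    intro x y t
    rw [Matrix.mulVec_add, Matrix.mulVec_smul, Matrix.mulVec_smul]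
  have Lf₁ := l₁.comp_lin (fun x => T.mulVec x) Tc
  have Lf₂ := l₂.comp_lin (fun x => T.mulVec x) Tc
  have Mf₁ := m₁.ennreal_ofReal.comp (measurable_mulVec T)
  have Mf₂ := m₂.ennreal_ofReal.comp (measurable_mulVec T)
  have If₁ : ∫⁻ x, ENNReal.ofReal (f₁ (WithLp.toLp 2 (T.mulVec x))) =
      ENNReal.ofReal (D⁻¹ * ∫ x, f₁ x) := by
    rw [lintegral_mulVec T Tdet (fun x => ENNReal.ofReal (f₁ (WithLp.toLp 2 x))) m₁.ennreal_ofReal,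
      ← ofReal_integral_eq_lintegral_ofReal i₁ (Filter.Eventually.of_forall fun x => p₁ _),
      ← int_toLp, ← ENNReal.ofReal_mul (by positivity)]
  have If₂ : ∫⁻ x, ENNReal.ofReal (f₂ (WithLp.toLp 2 (T.mulVec x))) =
      ENNReal.ofReal (D⁻¹ * ∫ x, f₂ x) := by
    rw [lintegral_mulVec T Tdet (fun x => ENNReal.ofReal (f₂ (WithLp.toLp 2 x))) m₂.ennreal_ofReal,
      ← ofReal_integral_eq_lintegral_ofReal i₂ (Filter.Eventually.of_forall fun x => p₂ _),
      ← int_toLp, ← ENNReal.ofReal_mul (by positivity)]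
  -- boundedness of f₂
  have hb : BddAbove (Set.range f₂) := by
    have e := ofReal_integral_eq_lintegral_ofReal i₂ (Filter.Eventually.of_forall fun x => p₂ _)
    obtain ⟨B, bt, hB⟩ := l₂.bdd volume m₂.ennreal_ofReal (by rw [← e]; simpa using I₂)
      (by rw [← e]; simp)
    refine ⟨B.toReal, ?_⟩
    rintro _ ⟨x, rfl⟩
    exact (ENNReal.ofReal_le_iff_le_toReal bt).1 (hB (WithLp.ofLp x))
  have hle : ∀ x, f₂ x ≤ supNorm f₂ := fun x => le_ciSup hb x
  have M₂0 : 0 < supNorm f₂ := by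
    by_contra h
    have : ∀ x, f₂ x = 0 := fun x => le_antisymm ((hle x).trans (not_lt.1 h)) (p₂ x)
    simp [this] at I₂0
  have M₁0 : 0 ≤ supNorm f₁ := Real.iSup_nonneg p₁
  -- the good coordinate subspace
  obtain ⟨φ, hφ, hup⟩ := upper k hk (supNorm f₂) M₂0 d _ Mf₂ Lf₂ _ (by positivity)
    (fun x => ENNReal.ofReal_le_ofReal (hle _)) If₂
  obtain ⟨_, hlow⟩ := lower_sect φ hφ _ Mf₁ Lf₁ _ (by positivity) If₁ hT1 hT2
  -- transfer of the Busemann-Petty condition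
  let A : (Fin k → ℝ) →ₗ[ℝ] Eucl (k + d) :=
    (WithLp.linearEquiv 2 ℝ (Fin (k + d) → ℝ)).symm.toLinearMap ∘ₗ Matrix.toLin' T ∘ₗ
      Function.ExtendByZero.linearMap ℝ φ
  have hAe : ∀ y, A y = WithLp.toLp 2 (T.mulVec (Function.extend φ y 0)) := fun y => rfl
  have hA : Function.Injective A := by
    intro x y hxy
    rw [hAe, hAe] at hxy
    have h1 := WithLp.toLp_injective 2 hxy
    have h2 := (Matrix.mulVec_injective_iff_isUnit.2
      ((Matrix.isUnit_iff_isUnit_det T).2 (isUnit_iff_ne_zero.2 Tdet))) h1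
    ext l
    have := congrFun h2 (φ l)
    rwa [hφ.extend_apply, hφ.extend_apply] at this
  have hAm : Measurable fun y : Fin k → ℝ => (Function.extend φ y 0 : Fin (k + d) → ℝ) :=
    (LinearMap.continuous_of_finiteDimensional (Function.ExtendByZero.linearMap ℝ φ)).measurable
  obtain ⟨H, c, hH, hs⟩ := sect_transfer A hA
  have comp : ∫ y, f₁ (A y) ≤ ∫ y, f₂ (A y) := by
    rw [hs, hs]
    exact mul_le_mul_of_nonneg_left (hBP H hH) c.2
  rw [integral_eq_lintegral_of_nonneg_ae (f := fun y => f₁ (A y))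
      (Filter.Eventually.of_forall fun x => p₁ _)
      (m₁.comp ((measurable_mulVec T).comp hAm)).aestronglyMeasurable,
    integral_eq_lintegral_of_nonneg_ae (f := fun y => f₂ (A y))
      (Filter.Eventually.of_forall fun x => p₂ _)
      (m₂.comp ((measurable_mulVec T).comp hAm)).aestronglyMeasurable] at comp
  have up2 := ENNReal.toReal_le_of_le_ofReal (by positivity) hup
  have key := hlow.trans (comp.trans up2)
  have e2 : Real.exp (-Real.pi * ((k + d - k : ℕ) : ℝ)) = ((Real.exp Real.pi)⁻¹) ^ d := by
    rw [← Real.exp_neg, ← Real.exp_nat_mul]; congr 1; rw [Nat.add_sub_cancel_left]; ring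
  rw [e2] at key
  exact final_arith_s17 k d hk _ _ _ _ D _ _ _ I₁0 I₂0 M₁0 M₂0 D0
    (by rw [hT, Real.sq_sqrt dS.le]) (Real.exp_pos _) (by positivity) key

/-- **The functional Busemann–Petty problem, centered version** (Theorem 5.7):
there is an absolute constant `C > 0` such that if `f₁, f₂ ∈ Q₀ⁿ` satisfy the
Busemann–Petty condition for `k`-dimensional sections and `f₁` is centered, then
`‖f₁‖₁^{k/n}·‖f₁‖_∞^{(n−k)/n} ≤ (C·L_{f₁})^{n−k}·‖f₂‖₁^{k/n}·‖f₂‖_∞^{(n−k)/n}`. -/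
theorem functional_busemann_petty_centered :
    ∃ C : ℝ, 0 < C ∧ ∀ (n k : ℕ), 1 ≤ k → k < n →
      ∀ f₁ f₂ : Eucl n → ℝ, MemQ0 f₁ → MemQ0 f₂ →
        (∀ H : Submodule ℝ (Eucl n), Module.finrank ℝ H = k →
          sectL1 f₁ H ≤ sectL1 f₂ H) →
        (∀ i : Fin n, (∫ x, f₁ x * x i) = 0) →
        (∫ x, f₁ x) ^ ((k : ℝ) / n) * supNorm f₁ ^ (((n : ℝ) - k) / n) ≤
          (C * isoConst f₁) ^ (n - k) *
            ((∫ x, f₂ x) ^ ((k : ℝ) / n) * supNorm f₂ ^ (((n : ℝ) - k) / n)) := by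
  refine ⟨(51 * Real.exp Real.pi) * Real.exp Real.pi, by positivity, ?_⟩
  intro n k hk hkn f₁ f₂ q₁ q₂ hBP hc
  obtain ⟨d, rfl⟩ := Nat.exists_eq_add_of_le hkn.le
  exact core k d hk f₁ f₂ q₁ q₂ hBP hc
end
end
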